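/- arXiv:2112.13978 — 4 statements merged into one kernel-verified Lean document; each statement's English description precedes it below -/
import Mathlib

section
/- Let n ≥ 3 and let Ω, Ω₁ ⊂ ℝⁿ be open bounded sets with closure(Ω) ⊂ Ω₁. Then there exists a constant C > 0, depending on n, Ω and Ω₁, such that for every continuously differentiable f : ℝⁿ → ℝ supported in the closure of Ω, one has ‖Kf‖_{H¹(Ω₁)} ≤ C e^{C‖f‖_{C⁰}} (1 + ‖f‖_{H¹(ℝⁿ)}), where ‖f‖_{C⁰} is the supremum norm of f and ‖f‖_{H¹(ℝⁿ)} := (∫_{ℝⁿ}|f|²)^{1/2} + (∫_{ℝⁿ}|∇f|²)^{1/2}. -/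
open MeasureTheory Metric Real

/-- The `n`-dimensional Euclidean space. -/
abbrev Euc (n : ℕ) := EuclideanSpace ℝ (Fin n)

/-- The standard surface measure on the unit sphere `S^{n-1} ⊂ ℝⁿ`. -/
noncomputable def sphereMeasure (n : ℕ) : Measure (sphere (0 : Euc n) 1) :=
  (volume : Measure (Euc n)).toSphere

/-- The surface measure `|S^{n-1}|` of the unit sphere in `ℝⁿ`. -/
noncomputable def sphereVol (n : ℕ) : ℝ := (sphereMeasure n Set.univ).toReal

/-- The X-ray transform `Xf(x,θ) = ∫_ℝ f(x+sθ) ds`. -/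
noncomputable def Xray {n : ℕ} (f : Euc n → ℝ) (x θ : Euc n) : ℝ :=
  ∫ s : ℝ, f (x + s • θ)

/-- The normal operator `X'Xf(x) = ∫_{S^{n-1}} Xf(x,θ) dθ`. -/
noncomputable def normalOp {n : ℕ} (f : Euc n → ℝ) (x : Euc n) : ℝ :=
  ∫ θ : sphere (0 : Euc n) 1, Xray f x (θ : Euc n) ∂(sphereMeasure n)

/-- The single pixel X-ray transform `Kf(x) = ∫_{S^{n-1}} e^{-Xf(x,θ)} dθ`. -/
noncomputable def singlePixel {n : ℕ} (f : Euc n → ℝ) (x : Euc n) : ℝ :=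
  ∫ θ : sphere (0 : Euc n) 1, Real.exp (-(Xray f x (θ : Euc n))) ∂(sphereMeasure n)

/-- The Fourier transform `𝓕f(ξ) = ∫ e^{-i x·ξ} f(x) dx`. -/
noncomputable def FT {n : ℕ} (f : Euc n → ℝ) (ξ : Euc n) : ℂ :=
  ∫ x : Euc n, Complex.exp (-(Complex.I * ((inner ℝ x ξ : ℝ) : ℂ))) * (f x : ℂ)

/-- The inverse Fourier transform `𝓕⁻¹g(x) = (2π)^{-n} ∫ e^{i x·ξ} g(ξ) dξ`. -/
noncomputable def invFT {n : ℕ} (g : Euc n → ℂ) (x : Euc n) : ℂ :=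
  ((((2 * π) ^ n)⁻¹ : ℝ) : ℂ) * ∫ ξ : Euc n, Complex.exp (Complex.I * ((inner ℝ x ξ : ℝ) : ℂ)) * g ξ

/-- The `L²(ℝⁿ)` norm `(∫ |f|²)^{1/2}`. -/
noncomputable def L2norm {n : ℕ} (f : Euc n → ℝ) : ℝ :=
  (∫ x : Euc n, f x ^ 2) ^ ((1 : ℝ) / 2)

/-- The `H¹(U)` norm `(∫_U |u|²)^{1/2} + (∫_U |∇u|²)^{1/2}`. -/
noncomputable def H1norm {n : ℕ} (U : Set (Euc n)) (u : Euc n → ℝ) : ℝ :=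
  (∫ x in U, u x ^ 2) ^ ((1 : ℝ) / 2) + (∫ x in U, ‖fderiv ℝ u x‖ ^ 2) ^ ((1 : ℝ) / 2)

section

open Set Filter Topology

instance (n : ℕ) : IsFiniteMeasure (sphereMeasure n) :=
  inferInstanceAs (IsFiniteMeasure (volume : Measure (Euc n)).toSphere)

/-- Differentiation under the integral sign for a finite measure and a uniformly bounded
derivative. -/
lemma hasFDerivAt_integral_of_norm_fderiv_le_const {α E : Type*} [MeasurableSpace α]
    [NormedAddCommGroup E] [NormedSpace ℝ E] {μ : Measure α} [IsFiniteMeasure μ]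
    {F : E → α → ℝ} {F' : E → α → E →L[ℝ] ℝ} {B : ℝ}
    (hF : ∀ x, Integrable (F x) μ) (hF' : ∀ x, AEStronglyMeasurable (F' x) μ)
    (hB : ∀ x a, ‖F' x a‖ ≤ B) (hd : ∀ x a, HasFDerivAt (F · a) (F' x a) x) (x : E) :
    HasFDerivAt (fun x ↦ ∫ a, F x a ∂μ) (∫ a, F' x a ∂μ) x :=
  hasFDerivAt_integral_of_dominated_of_fderiv_le (s := univ) (bound := fun _ ↦ B) univ_mem
    (.of_forall fun x ↦ (hF x).aestronglyMeasurable) (hF x) (hF' x)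
    (.of_forall fun a x _ ↦ hB x a) (integrable_const B) (.of_forall fun a x _ ↦ hd x a)

/-- The Cauchy–Schwarz inequality against the constant function on a finite measure space. -/
lemma sq_integral_le_measureReal_mul {α : Type*} [MeasurableSpace α] {μ : Measure α}
    [IsFiniteMeasure μ] {h : α → ℝ} (h1 : Integrable h μ) (h2 : Integrable (fun a ↦ h a ^ 2) μ) :
    (∫ a, h a ∂μ) ^ 2 ≤ μ.real univ * ∫ a, h a ^ 2 ∂μ := by
  set V := μ.real univ with hV
  set I := ∫ a, h a ∂μ with hI
  rcases eq_or_lt_of_le (measureReal_nonneg : 0 ≤ μ.real univ) with h0 | hpos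
  · have hμ : μ = 0 := by
      rw [eq_comm, measureReal_eq_zero_iff] at h0
      exact Measure.measure_univ_eq_zero.mp h0
    simp [hI, hV, hμ]
  · have key : 0 ≤ ∫ a, (V * h a - I) ^ 2 ∂μ := integral_nonneg fun a ↦ sq_nonneg _
    have e : ∫ a, (V * h a - I) ^ 2 ∂μ = V * (V * ∫ a, h a ^ 2 ∂μ - I ^ 2) := by
      have : ∀ a, (V * h a - I) ^ 2 = (V ^ 2 * h a ^ 2 - 2 * V * I * h a) + I ^ 2 :=
        fun a ↦ by ring
      simp_rw [this]
      have hsub : Integrable (fun a ↦ V ^ 2 * h a ^ 2 - 2 * V * I * h a) μ :=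
        (h2.const_mul _).sub (h1.const_mul _)
      rw [integral_add hsub (integrable_const _),
        integral_sub (h2.const_mul _) (h1.const_mul _), integral_const_mul, integral_const_mul,
        integral_const, ← hV, ← hI, smul_eq_mul]
      ring
    rw [e] at key
    linarith [nonneg_of_mul_nonneg_right key hpos]

variable {n : ℕ} {f : Euc n → ℝ}

/-- The X-ray transform with the line truncated to `|s| ≤ L`. -/
noncomputable def truncXray (L : ℝ) (f : Euc n → ℝ) (x θ : Euc n) : ℝ :=
  ∫ s in Icc (-L) L, f (x + s • θ)

/-- The single pixel transform built from the truncated X-ray transform. -/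
noncomputable def truncSinglePixel (L : ℝ) (f : Euc n → ℝ) (x : Euc n) : ℝ :=
  ∫ θ : sphere (0 : Euc n) 1, Real.exp (-(truncXray L f x (θ : Euc n))) ∂(sphereMeasure n)

lemma Xray_eq_truncXray {R : ℝ} (hf : Function.support f ⊆ ball 0 R) {x θ : Euc n}
    (hx : x ∈ ball (0 : Euc n) R) (hθ : ‖θ‖ = 1) : Xray f x θ = truncXray (2 * R) f x θ := by
  refine (setIntegral_eq_integral_of_forall_compl_eq_zero fun s hs ↦ ?_).symm
  by_contra hne
  have h1 := mem_ball_zero_iff.1 (hf hne)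
  have h2 := mem_ball_zero_iff.1 hx
  have h3 : ‖s • θ‖ ≤ ‖x + s • θ‖ + ‖x‖ := by
    simpa using norm_sub_le (x + s • θ) x
  rw [norm_smul, hθ, mul_one, Real.norm_eq_abs] at h3
  exact hs (abs_le.1 (by linarith))

lemma singlePixel_eq_truncSinglePixel {R : ℝ} (hf : Function.support f ⊆ ball 0 R) {x : Euc n}
    (hx : x ∈ ball (0 : Euc n) R) : singlePixel f x = truncSinglePixel (2 * R) f x := by
  unfold singlePixel truncSinglePixel
  congr 1 with θ
  rw [Xray_eq_truncXray hf hx (by simp)]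

lemma continuous_setIntegral_line {F : Type*} [NormedAddCommGroup F] [NormedSpace ℝ F] (L : ℝ)
    {g : Euc n → F} (hg : Continuous g) (x : Euc n) :
    Continuous fun θ : sphere (0 : Euc n) 1 ↦ ∫ s in Icc (-L) L, g (x + s • (θ : Euc n)) :=
  continuous_parametric_integral_of_continuous
    (f := fun (θ : sphere (0 : Euc n) 1) (s : ℝ) ↦ g (x + s • (θ : Euc n)))
    (by unfold Function.uncurry; fun_prop) isCompact_Icc

lemma norm_setIntegral_line_le {F : Type*} [NormedAddCommGroup F] [NormedSpace ℝ F] {L : ℝ}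
    (hL : 0 ≤ L) {g : Euc n → F} {M : ℝ} (hM : ∀ y, ‖g y‖ ≤ M) (x θ : Euc n) :
    ‖∫ s in Icc (-L) L, g (x + s • θ)‖ ≤ 2 * L * M := by
  refine (norm_setIntegral_le_of_norm_le_const (C := M) (by simp) fun s _ ↦ hM _).trans_eq ?_
  rw [Real.volume_real_Icc_of_le (by linarith)]
  ring

lemma exp_neg_truncXray_le {L M : ℝ} (hL : 0 ≤ L) (hM : ∀ y, ‖f y‖ ≤ M) (x θ : Euc n) :
    Real.exp (-truncXray L f x θ) ≤ Real.exp (2 * L * M) :=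
  Real.exp_le_exp.2 <| (neg_le_abs _).trans (norm_setIntegral_line_le hL hM x θ)

lemma hasFDerivAt_truncXray {L B : ℝ} (hf : ContDiff ℝ 1 f) (hB : ∀ y, ‖fderiv ℝ f y‖ ≤ B)
    (x θ : Euc n) :
    HasFDerivAt (fun x ↦ truncXray L f x θ) (∫ s in Icc (-L) L, fderiv ℝ f (x + s • θ)) x := by
  have hc := hf.continuous
  have hc' := hf.continuous_fderiv one_ne_zero
  refine hasFDerivAt_integral_of_norm_fderiv_le_const (B := B)
    (F := fun x s ↦ f (x + s • θ)) (F' := fun x s ↦ fderiv ℝ f (x + s • θ))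
    (fun x ↦ ?_) (fun x ↦ ?_) (fun x s ↦ hB _) (fun x s ↦ ?_) x
  · exact Continuous.integrableOn_Icc (by fun_prop)
  · exact Continuous.aestronglyMeasurable (by fun_prop)
  · exact ((hf.differentiable one_ne_zero (x + s • θ)).hasFDerivAt.comp x
      ((hasFDerivAt_id x).add_const _))

/-- The measure on `S^{n-1} × [-L, L]` parametrizing the lines' points. -/
noncomputable abbrev lineMeasure (n : ℕ) (L : ℝ) : Measure (sphere (0 : Euc n) 1 × ℝ) :=
  (sphereMeasure n).prod (volume.restrict (Icc (-L) L))

lemma norm_fderiv_truncSinglePixel_le {L M B : ℝ} (hL : 0 ≤ L) (hf : ContDiff ℝ 1 f)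
    (hM : ∀ y, ‖f y‖ ≤ M) (hB : ∀ y, ‖fderiv ℝ f y‖ ≤ B) (x : Euc n) :
    ‖fderiv ℝ (truncSinglePixel L f) x‖ ≤
      Real.exp (2 * L * M) *
        ∫ p, ‖fderiv ℝ f (x + p.2 • (p.1 : Euc n))‖ ∂(lineMeasure n L) := by
  have hc := hf.continuous
  have hc' := hf.continuous_fderiv one_ne_zero
  have hcX : ∀ x, Continuous fun θ : sphere (0 : Euc n) 1 ↦ truncXray L f x θ :=
    fun x ↦ continuous_setIntegral_line L hc x
  have hcD := continuous_setIntegral_line L hc'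
  have hd : HasFDerivAt (truncSinglePixel L f) (∫ θ : sphere (0 : Euc n) 1,
      -(Real.exp (-truncXray L f x θ) • ∫ s in Icc (-L) L, fderiv ℝ f (x + s • (θ : Euc n)))
        ∂(sphereMeasure n)) x := by
    refine hasFDerivAt_integral_of_norm_fderiv_le_const
      (B := Real.exp (2 * L * M) * (2 * L * B))
      (F := fun x (θ : sphere (0 : Euc n) 1) ↦ Real.exp (-truncXray L f x θ))
      (F' := fun x (θ : sphere (0 : Euc n) 1) ↦
        -(Real.exp (-truncXray L f x θ) • ∫ s in Icc (-L) L, fderiv ℝ f (x + s • (θ : Euc n))))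
      (fun x ↦ ?_) (fun x ↦ ?_) (fun x θ ↦ ?_) (fun x θ ↦ ?_) x
    · refine Integrable.of_bound (C := Real.exp (2 * L * M))
        ((hcX x).neg.rexp).aestronglyMeasurable (.of_forall fun θ ↦ ?_)
      rw [Real.norm_eq_abs, Real.abs_exp]
      exact exp_neg_truncXray_le hL hM x θ
    · exact (((hcX x).neg.rexp).smul (hcD x)).neg.aestronglyMeasurable
    · rw [norm_neg, norm_smul, Real.norm_eq_abs, Real.abs_exp]
      exact mul_le_mul (exp_neg_truncXray_le hL hM x θ) (norm_setIntegral_line_le hL hB x θ)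
        (norm_nonneg _) (Real.exp_pos _).le
    · simpa using (hasFDerivAt_truncXray (L := L) hf hB x θ).neg.exp
  have hint : Integrable (fun p ↦ ‖fderiv ℝ f (x + p.2 • (p.1 : Euc n))‖) (lineMeasure n L) :=
    Integrable.of_bound (C := B) (Continuous.aestronglyMeasurable (by fun_prop))
      (.of_forall fun p ↦ by rw [norm_norm]; exact hB _)
  rw [hd.fderiv, integral_prod _ hint, ← integral_const_mul]
  refine norm_integral_le_of_norm_le (hint.integral_prod_left.const_mul _) (.of_forall fun θ ↦ ?_)
  rw [norm_neg, norm_smul, Real.norm_eq_abs, Real.abs_exp]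
  exact mul_le_mul (exp_neg_truncXray_le hL hM x θ) (norm_integral_le_integral_norm _)
    (norm_nonneg _) (Real.exp_pos _).le

/-- Averaging translates of an `L²` function over a finite measure is bounded on `L²`. -/
lemma setIntegral_sq_integral_translate_le {α : Type*} [MeasurableSpace α] {ν : Measure α}
    [IsFiniteMeasure ν] {τ : α → Euc n} (hτ : Measurable τ) {B : ℝ} {h : Euc n → ℝ}
    (hh : Continuous h) (hhc : HasCompactSupport h) (hB : ∀ y, ‖h y‖ ≤ B) {U : Set (Euc n)}
    (hU : volume U ≠ ⊤) :
    ∫ x in U, (∫ p, h (x + τ p) ∂ν) ^ 2 ≤ ν.real univ ^ 2 * ∫ x, h x ^ 2 := by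
  have : IsFiniteMeasure (volume.restrict U) := ⟨by simpa using hU.lt_top⟩
  have hm : Measurable h := hh.measurable
  have hB2 : ∀ y, ‖h y ^ 2‖ ≤ B ^ 2 := fun y ↦ by
    rw [norm_pow]; exact pow_le_pow_left₀ (norm_nonneg _) (hB y) 2
  have hint : Integrable (fun q : Euc n × α ↦ h (q.1 + τ q.2) ^ 2)
      ((volume.restrict U).prod ν) :=
    Integrable.of_bound (C := B ^ 2) (Measurable.aestronglyMeasurable (by fun_prop))
      (.of_forall fun q ↦ hB2 _)
  have hcs : HasCompactSupport fun x ↦ h x ^ 2 :=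
    hhc.mono fun x hx hx0 ↦ hx (by simp [hx0])
  have hcont : Continuous fun x ↦ h x ^ 2 := by fun_prop
  have hint2 : Integrable fun x ↦ h x ^ 2 := hcont.integrable_of_hasCompactSupport hcs
  calc ∫ x in U, (∫ p, h (x + τ p) ∂ν) ^ 2
      ≤ ∫ x in U, ν.real univ * ∫ p, h (x + τ p) ^ 2 ∂ν := by
        refine integral_mono_of_nonneg (.of_forall fun x ↦ sq_nonneg _)
          (hint.integral_prod_left.const_mul _) (.of_forall fun x ↦ ?_)
        exact sq_integral_le_measureReal_mul
          (Integrable.of_bound (C := B) (Measurable.aestronglyMeasurable (by fun_prop))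
            (.of_forall fun q ↦ hB _))
          (Integrable.of_bound (C := B ^ 2) (Measurable.aestronglyMeasurable (by fun_prop))
            (.of_forall fun q ↦ hB2 _))
    _ = ν.real univ * ∫ p, (∫ x in U, h (x + τ p) ^ 2) ∂ν := by
        rw [integral_const_mul, integral_integral_swap hint]
    _ ≤ ν.real univ * ∫ _, (∫ x, h x ^ 2) ∂ν := by
        refine mul_le_mul_of_nonneg_left (integral_mono_of_nonneg
          (.of_forall fun p ↦ integral_nonneg fun x ↦ sq_nonneg _) (integrable_const _)
          (.of_forall fun p ↦ ?_)) measureReal_nonneg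
        have := integral_add_right_eq_self (μ := volume) (fun x ↦ h x ^ 2) (τ p)
        refine (setIntegral_le_integral ?_ (.of_forall fun x ↦ sq_nonneg _)).trans_eq this
        exact hint2.comp_add_right _
    _ = ν.real univ ^ 2 * ∫ x, h x ^ 2 := by
        rw [integral_const, smul_eq_mul]; ring

lemma setIntegral_sq_singlePixel_le {R M : ℝ} (hR : 0 ≤ R) (hM : ∀ y, ‖f y‖ ≤ M)
    (hf : Function.support f ⊆ ball 0 R) {U : Set (Euc n)} (hU : U ⊆ ball 0 R) :
    ∫ x in U, singlePixel f x ^ 2 ≤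
      volume.real U * ((sphereMeasure n).real univ * Real.exp (4 * R * M)) ^ 2 := by
  have hfin : volume U ≠ ⊤ := measure_ne_top_of_subset hU measure_ball_lt_top.ne
  refine (le_abs_self _).trans ((norm_setIntegral_le_of_norm_le_const
    (f := fun x ↦ singlePixel f x ^ 2) (C := ((sphereMeasure n).real univ * Real.exp (4 * R * M)) ^ 2) hfin.lt_top
    fun x hx ↦ ?_).trans_eq (mul_comm _ _))
  rw [norm_pow]
  refine pow_le_pow_left₀ (norm_nonneg _) ?_ 2
  rw [singlePixel_eq_truncSinglePixel hf (hU hx)]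
  refine (norm_integral_le_of_norm_le_const (.of_forall fun θ ↦ ?_)).trans_eq (mul_comm _ _)
  rw [Real.norm_eq_abs, Real.abs_exp]
  exact (exp_neg_truncXray_le (by linarith) hM x θ).trans_eq (by ring_nf)

lemma setIntegral_sq_norm_fderiv_singlePixel_le {R M : ℝ} (hR : 0 ≤ R) (hM : ∀ y, ‖f y‖ ≤ M)
    (hfd : ContDiff ℝ 1 f) (hf : Function.support f ⊆ ball 0 R) (hfc : HasCompactSupport f)
    {U : Set (Euc n)} (hUm : MeasurableSet U) (hU : U ⊆ ball 0 R) :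
    ∫ x in U, ‖fderiv ℝ (singlePixel f) x‖ ^ 2 ≤
      (Real.exp (4 * R * M) * (lineMeasure n (2 * R)).real univ) ^ 2 *
        ∫ x, ‖fderiv ℝ f x‖ ^ 2 := by
  have hfin : volume U ≠ ⊤ := measure_ne_top_of_subset hU measure_ball_lt_top.ne
  have : IsFiniteMeasure (volume.restrict U) := ⟨by simpa using hfin.lt_top⟩
  have hc' := hfd.continuous_fderiv one_ne_zero
  have hcs : HasCompactSupport (fderiv ℝ f) := hfc.fderiv ℝ
  obtain ⟨B, hB⟩ := hcs.exists_bound_of_continuous hc'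
  set ν := lineMeasure n (2 * R)
  have hmeas : AEStronglyMeasurable
      (fun x ↦ ∫ p, ‖fderiv ℝ f (x + p.2 • (p.1 : Euc n))‖ ∂ν) (volume.restrict U) :=
    AEStronglyMeasurable.integral_prod_right' (f := fun q : Euc n × (sphere (0 : Euc n) 1 × ℝ) ↦
      ‖fderiv ℝ f (q.1 + q.2.2 • (q.2.1 : Euc n))‖)
      (Continuous.aestronglyMeasurable (by fun_prop))
  have hint : Integrable (fun x ↦ (∫ p, ‖fderiv ℝ f (x + p.2 • (p.1 : Euc n))‖ ∂ν) ^ 2)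
      (volume.restrict U) := by
    refine Integrable.of_bound (C := (B * ν.real univ) ^ 2) (hmeas.pow 2) (.of_forall fun x ↦ ?_)
    rw [norm_pow]
    refine pow_le_pow_left₀ (norm_nonneg _) (norm_integral_le_of_norm_le_const
      (.of_forall fun p ↦ ?_)) 2
    rw [norm_norm]
    exact hB _
  calc ∫ x in U, ‖fderiv ℝ (singlePixel f) x‖ ^ 2
      ≤ ∫ x in U, Real.exp (4 * R * M) ^ 2 *
          (∫ p, ‖fderiv ℝ f (x + p.2 • (p.1 : Euc n))‖ ∂ν) ^ 2 := by
        refine integral_mono_of_nonneg (.of_forall fun x ↦ sq_nonneg _) (hint.const_mul _) ?_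
        filter_upwards [ae_restrict_mem hUm] with x hx
        have he : singlePixel f =ᶠ[𝓝 x] truncSinglePixel (2 * R) f := by
          filter_upwards [isOpen_ball.mem_nhds (hU hx)] with y hy
          exact singlePixel_eq_truncSinglePixel hf hy
        rw [he.fderiv_eq, ← mul_pow]
        refine pow_le_pow_left₀ (norm_nonneg _) ?_ 2
        refine (norm_fderiv_truncSinglePixel_le (by linarith) hfd hM hB x).trans_eq ?_
        rw [show 2 * (2 * R) * M = 4 * R * M by ring]
    _ ≤ Real.exp (4 * R * M) ^ 2 * (ν.real univ ^ 2 * ∫ x, ‖fderiv ℝ f x‖ ^ 2) := by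
        rw [integral_const_mul]
        exact mul_le_mul_of_nonneg_left (setIntegral_sq_integral_translate_le
          (by fun_prop : Measurable fun p : sphere (0 : Euc n) 1 × ℝ ↦ p.2 • (p.1 : Euc n))
          hc'.norm hcs.norm
          (fun y ↦ by rw [norm_norm]; exact hB y) hfin) (sq_nonneg _)
    _ = _ := by ring

end

/-- For `n ≥ 3` and open bounded `Ω, Ω₁` with `closure Ω ⊂ Ω₁`, there is `C > 0`
such that for every `C¹` function `f` supported in `closure Ω`,
`‖Kf‖_{H¹(Ω₁)} ≤ C e^{C‖f‖_{C⁰}} (1 + ‖f‖_{H¹(ℝⁿ)})`. -/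
theorem singlePixel_mapping_property (n : ℕ) (hn : 3 ≤ n) (Ω Ω₁ : Set (Euc n))
    (hΩo : IsOpen Ω) (hΩb : Bornology.IsBounded Ω)
    (hΩ₁o : IsOpen Ω₁) (hΩ₁b : Bornology.IsBounded Ω₁) (hΩΩ₁ : closure Ω ⊆ Ω₁) :
    ∃ C > 0, ∀ f : Euc n → ℝ, ContDiff ℝ 1 f → Function.support f ⊆ closure Ω →
      H1norm Ω₁ (singlePixel f) ≤
        C * Real.exp (C * ⨆ x : Euc n, |f x|) *
          (1 + ((∫ x : Euc n, f x ^ 2) ^ ((1 : ℝ) / 2) +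
            (∫ x : Euc n, ‖fderiv ℝ f x‖ ^ 2) ^ ((1 : ℝ) / 2))) := by
  obtain ⟨R, hR, hΩ₁R⟩ := hΩ₁b.subset_ball_lt 0 0
  set S := (sphereMeasure n).real Set.univ
  set V := (lineMeasure n (2 * R)).real Set.univ
  set W := √(volume.real Ω₁)
  have hS : 0 ≤ S := measureReal_nonneg
  have hV : 0 ≤ V := measureReal_nonneg
  have hW : 0 ≤ W := Real.sqrt_nonneg _
  have hWS : 0 ≤ W * S := mul_nonneg hW hS
  refine ⟨4 * R + V + W * S, by positivity, fun f hfd hfs ↦ ?_⟩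
  have hfR : Function.support f ⊆ ball 0 R := hfs.trans (hΩΩ₁.trans hΩ₁R)
  have hfc : HasCompactSupport f :=
    HasCompactSupport.of_support_subset_isCompact hΩb.isCompact_closure hfs
  obtain ⟨B, hB⟩ := hfc.exists_bound_of_continuous hfd.continuous
  set M := ⨆ x, |f x|
  have hM : ∀ y, ‖f y‖ ≤ M := le_ciSup (f := fun x ↦ |f x|) ⟨B, by rintro _ ⟨y, rfl⟩; exact hB y⟩
  have hM0 : 0 ≤ M := (norm_nonneg _).trans (hM 0)
  have h1 := setIntegral_sq_singlePixel_le hR.le hM hfR hΩ₁R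
  have h2 := setIntegral_sq_norm_fderiv_singlePixel_le hR.le hM hfd hfR hfc hΩ₁o.measurableSet hΩ₁R
  set E := Real.exp (4 * R * M)
  have hE : 0 ≤ E := (Real.exp_pos _).le
  unfold H1norm
  simp_rw [← Real.sqrt_eq_rpow]
  set F := √(∫ x, f x ^ 2)
  set G := √(∫ x, ‖fderiv ℝ f x‖ ^ 2) with hG
  have hF0 : 0 ≤ F := Real.sqrt_nonneg _
  have hG0 : 0 ≤ G := Real.sqrt_nonneg _
  replace h1 := Real.sqrt_le_sqrt h1
  replace h2 := Real.sqrt_le_sqrt h2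
  rw [Real.sqrt_mul measureReal_nonneg, Real.sqrt_sq (by positivity)] at h1
  rw [Real.sqrt_mul (by positivity), Real.sqrt_sq (by positivity), ← hG] at h2
  have hEC : E ≤ Real.exp ((4 * R + V + W * S) * M) :=
    Real.exp_le_exp.2 (mul_le_mul_of_nonneg_right (by linarith) hM0)
  calc _ ≤ W * (S * E) + E * V * G := add_le_add h1 h2
    _ = E * (W * S * 1 + V * G) := by ring
    _ ≤ E * ((4 * R + V + W * S) * (1 + (F + G))) := by
        refine mul_le_mul_of_nonneg_left ?_ hE
        have : 0 ≤ 4 * R * (1 + (F + G)) + V * (1 + F) + W * S * (F + G) := by positivity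
        linarith
    _ ≤ Real.exp ((4 * R + V + W * S) * M) * ((4 * R + V + W * S) * (1 + (F + G))) :=
        mul_le_mul_of_nonneg_right hEC (by positivity)
    _ = _ := by ring
end

section
/- Let n ≥ 3 and let Ω, Ω₁ ⊂ ℝⁿ be open bounded sets with closure(Ω) ⊂ Ω₁. Then there exists a constant C > 0, depending on n, Ω and Ω₁, such that for every continuously differentiable f : ℝⁿ → ℝ supported in the closure of Ω, the gradient of Kf satisfies ‖∇(Kf)‖_{L²(Ω₁)} ≤ C e^{C‖f‖_{C⁰}} ‖∇f‖_{L²(ℝⁿ)}, where ‖f‖_{C⁰} is the supremum norm of f. -/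
open MeasureTheory Metric Real

open Set

/-- The Cauchy-Schwarz inequality against the constant function `1`. -/
lemma sq_integral_le_measureReal_mul_integral_sq {α : Type*} [MeasurableSpace α] {μ : Measure α}
    [IsFiniteMeasure μ] {g : α → ℝ} (hg : Integrable g μ) (hg2 : Integrable (fun a => g a ^ 2) μ) :
    (∫ a, g a ∂μ) ^ 2 ≤ μ.real univ * ∫ a, g a ^ 2 ∂μ := by
  set m := μ.real univ with hm
  set I := ∫ a, g a ∂μ with hI
  have hm0 : 0 ≤ m := measureReal_nonneg
  have hexp : ∫ a, (m * g a - I) ^ 2 ∂μ = m * (m * (∫ a, g a ^ 2 ∂μ) - I ^ 2) := by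
    have h1 : ∀ a, (m * g a - I) ^ 2 = m ^ 2 * g a ^ 2 - 2 * m * I * g a + I ^ 2 := fun a => by ring
    simp_rw [h1]
    have h2 : Integrable (fun a => m ^ 2 * g a ^ 2 - 2 * m * I * g a) μ :=
      (hg2.const_mul _).sub (hg.const_mul _)
    rw [integral_add h2 (integrable_const _),
      integral_sub (hg2.const_mul _) (hg.const_mul _), integral_const_mul, integral_const_mul,
      integral_const, ← hI, ← hm, smul_eq_mul]
    ring
  have hnonneg : 0 ≤ ∫ a, (m * g a - I) ^ 2 ∂μ := integral_nonneg fun a => sq_nonneg _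
  rw [hexp] at hnonneg
  rcases hm0.eq_or_lt with h0 | hpos
  · have hμ : μ = 0 := by
      rw [← Measure.measure_univ_eq_zero]
      exact (measureReal_eq_zero_iff (measure_ne_top μ univ)).1 (hm ▸ h0.symm)
    have : I = 0 := by rw [hI, hμ, integral_zero_measure]
    simp [this, ← h0]
  · nlinarith [nonneg_of_mul_nonneg_right hnonneg hpos]

/-- Differentiation under the integral for an integral of a bounded `C¹` function with bounded
derivative along a segment. -/
lemma hasFDerivAt_integral_segment {E : Type*} [NormedAddCommGroup E] [NormedSpace ℝ E]
    {f : E → ℝ} (hf : ContDiff ℝ 1 f) {M D : ℝ}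
    (hM : ∀ x, |f x| ≤ M) (hD : ∀ x, ‖fderiv ℝ f x‖ ≤ D) (R : ℝ) (x θ : E) :
    HasFDerivAt (fun y => ∫ s in Icc (-R) R, f (y + s • θ))
      (∫ s in Icc (-R) R, fderiv ℝ f (x + s • θ)) x := by
  have hf' : Continuous (fderiv ℝ f) := hf.continuous_fderiv one_ne_zero
  have hfc := hf.continuous
  refine hasFDerivAt_integral_of_dominated_of_fderiv_le (s := univ)
    (F' := fun y s => fderiv ℝ f (y + s • θ)) (bound := fun _ => D)
    Filter.univ_mem (.of_forall fun y => ?_) ?_ ?_ (.of_forall fun s y _ => hD _)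
    (integrable_const _) (.of_forall fun s y _ => ?_)
  · exact (by fun_prop : Continuous fun s : ℝ => f (y + s • θ)).aestronglyMeasurable
  · exact Integrable.of_bound
      (by fun_prop : Continuous fun s : ℝ => f (x + s • θ)).aestronglyMeasurable M
      (.of_forall fun s => hM _)
  · exact (by fun_prop : Continuous fun s : ℝ => fderiv ℝ f (x + s • θ)).aestronglyMeasurable
  · exact (hasFDerivAt_comp_add_right _).2 (hf.differentiable one_ne_zero _).hasFDerivAt

lemma norm_integral_segment_le {E : Type*} [NormedAddCommGroup E] [NormedSpace ℝ E]
    {F : Type*} [NormedAddCommGroup F] [NormedSpace ℝ F]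
    {f : E → F} {M : ℝ} (hM : ∀ x, ‖f x‖ ≤ M) {R : ℝ} (hR : 0 ≤ R) (x θ : E) :
    ‖∫ s in Icc (-R) R, f (x + s • θ)‖ ≤ 2 * R * M := by
  refine (norm_integral_le_of_norm_le_const (.of_forall fun s => hM _)).trans_eq ?_
  rw [measureReal_restrict_apply_univ, Real.volume_real_Icc_of_le (by linarith)]
  ring

lemma continuous_integral_segment {E F : Type*} [NormedAddCommGroup E] [NormedSpace ℝ E]
    [NormedAddCommGroup F] [NormedSpace ℝ F] {f : E → F} (hf : Continuous f)
    {M : ℝ} (hM : ∀ x, ‖f x‖ ≤ M) (R : ℝ) (x : E) (S : Set E) :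
    Continuous fun θ : S => ∫ s in Icc (-R) R, f (x + s • (θ : E)) := by
  refine continuous_of_dominated (bound := fun _ => M) (fun θ => ?_)
    (fun θ => .of_forall fun s => hM _) (integrable_const _) (.of_forall fun s => by fun_prop)
  exact (by fun_prop : Continuous fun s : ℝ => f (x + s • (θ : E))).aestronglyMeasurable

instance inst_s12 (n : ℕ) : IsFiniteMeasure (sphereMeasure n) := by
  unfold sphereMeasure; infer_instance

/-- On a ball of radius `r` containing the support of `f`, the X-ray transform only sees
parameters in `[-2r, 2r]`. -/
lemma Xray_eq_integral_segment {n : ℕ} {f : Euc n → ℝ} {r : ℝ}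
    (hsupp : Function.support f ⊆ ball 0 r) {x : Euc n} (hx : x ∈ ball 0 r)
    (θ : sphere (0 : Euc n) 1) :
    Xray f x θ = ∫ s in Icc (-(2 * r)) (2 * r), f (x + s • (θ : Euc n)) := by
  refine (setIntegral_eq_integral_of_forall_compl_eq_zero fun s hs => ?_).symm
  by_contra hne
  have h1 : ‖x + s • (θ : Euc n)‖ < r := mem_ball_zero_iff.1 (hsupp hne)
  have h2 : ‖x‖ < r := mem_ball_zero_iff.1 hx
  have h3 : ‖s • (θ : Euc n)‖ ≤ ‖x + s • (θ : Euc n)‖ + ‖x‖ := by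
    simpa using norm_sub_le (x + s • (θ : Euc n)) x
  rw [norm_smul, norm_eq_of_mem_sphere, mul_one, Real.norm_eq_abs] at h3
  exact hs (abs_le.1 (by linarith))

/-- The pointwise bound of `∇(Kf)` by the integral of `|∇f|` over segments through `x`. -/
lemma norm_fderiv_singlePixel_le {n : ℕ} {f : Euc n → ℝ} (hf : ContDiff ℝ 1 f) {M D : ℝ}
    (hM : ∀ x, |f x| ≤ M) (hD : ∀ x, ‖fderiv ℝ f x‖ ≤ D) {r : ℝ} (hr : 0 ≤ r)
    (hsupp : Function.support f ⊆ ball 0 r) {x : Euc n} (hx : x ∈ ball 0 r) :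
    ‖fderiv ℝ (singlePixel f) x‖ ≤ Real.exp (2 * (2 * r) * M) *
      ∫ θ : sphere (0 : Euc n) 1, (∫ s in Icc (-(2 * r)) (2 * r),
        ‖fderiv ℝ f (x + s • (θ : Euc n))‖) ∂(sphereMeasure n) := by
  set R := 2 * r
  have hR : 0 ≤ R := by positivity
  have hf' : Continuous (fderiv ℝ f) := hf.continuous_fderiv one_ne_zero
  set Y : Euc n → sphere (0 : Euc n) 1 → ℝ :=
    fun y θ => ∫ s in Icc (-R) R, f (y + s • (θ : Euc n)) with hY
  set Y' : Euc n → sphere (0 : Euc n) 1 → (Euc n →L[ℝ] ℝ) :=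
    fun y θ => ∫ s in Icc (-R) R, fderiv ℝ f (y + s • (θ : Euc n)) with hY'
  have hYc : ∀ y, Continuous (Y y) := fun y =>
    continuous_integral_segment hf.continuous hM R y _
  have hY'c : ∀ y, Continuous (Y' y) := fun y => continuous_integral_segment hf' hD R y _
  have hexp : ∀ y θ, Real.exp (-Y y θ) ≤ Real.exp (2 * R * M) := fun y θ =>
    Real.exp_le_exp.2 ((neg_le_abs _).trans
      (norm_integral_segment_le (f := f) hM hR y (θ : Euc n)))
  have hderiv : HasFDerivAt (fun y => ∫ θ, Real.exp (-Y y θ) ∂(sphereMeasure n))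
      (∫ θ, Real.exp (-Y x θ) • -Y' x θ ∂(sphereMeasure n)) x := by
    refine hasFDerivAt_integral_of_dominated_of_fderiv_le (s := univ)
      (F' := fun y θ => Real.exp (-Y y θ) • -Y' y θ)
      (bound := fun _ => Real.exp (2 * R * M) * (2 * R * D))
      Filter.univ_mem (.of_forall fun y => ?_) ?_ ?_ (.of_forall fun θ y _ => ?_)
      (integrable_const _) (.of_forall fun θ y _ => ?_)
    · exact (Real.continuous_exp.comp (hYc y).neg).aestronglyMeasurable
    · exact Integrable.of_bound (Real.continuous_exp.comp (hYc x).neg).aestronglyMeasurable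
        (Real.exp (2 * R * M)) (.of_forall fun θ => by simpa using hexp x θ)
    · exact ((Real.continuous_exp.comp (hYc x).neg).smul (hY'c x).neg).aestronglyMeasurable
    · rw [norm_smul, norm_neg, Real.norm_of_nonneg (Real.exp_pos _).le]
      exact mul_le_mul (hexp y θ) (norm_integral_segment_le hD hR y θ) (norm_nonneg _)
        (Real.exp_pos _).le
    · exact (hasFDerivAt_integral_segment hf hM hD R y θ).neg.exp
  have hK : singlePixel f =ᶠ[nhds x] fun y => ∫ θ, Real.exp (-Y y θ) ∂(sphereMeasure n) := by
    filter_upwards [isOpen_ball.mem_nhds hx] with y hy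
    simp only [singlePixel, hY]
    exact integral_congr_ae (.of_forall fun θ => by
      simp only [Xray_eq_integral_segment hsupp hy θ, R])
  rw [(hderiv.congr_of_eventuallyEq hK).fderiv, ← integral_const_mul]
  have hnc : Continuous fun θ : sphere (0 : Euc n) 1 =>
      ∫ s in Icc (-R) R, ‖fderiv ℝ f (x + s • (θ : Euc n))‖ :=
    continuous_integral_segment hf'.norm (by simpa using hD) R x _
  refine norm_integral_le_of_norm_le ((Integrable.of_bound hnc.aestronglyMeasurable (2 * R * D)
    (.of_forall fun θ => ?_)).const_mul _) (.of_forall fun θ => ?_)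
  · exact norm_integral_segment_le (f := fun y => ‖fderiv ℝ f y‖) (by simpa using hD) hR x _
  · rw [norm_smul, norm_neg, Real.norm_of_nonneg (Real.exp_pos _).le]
    exact mul_le_mul (hexp x θ) (norm_integral_le_integral_norm _) (norm_nonneg _)
      (Real.exp_pos _).le

/-- Translates of an integrable continuous function are jointly integrable against a finite
measure on the translation parameter. -/
lemma integrable_prod_translate {n : ℕ} {β : Type*} [TopologicalSpace β] [MeasurableSpace β]
    [OpensMeasurableSpace β] [SecondCountableTopology β]
    {μ : Measure β} [IsFiniteMeasure μ] {v : β → Euc n} (hv : Continuous v) {g : Euc n → ℝ}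
    (hg : Continuous g) (hgi : Integrable g) :
    Integrable (fun p : Euc n × β => g (p.1 + v p.2)) (volume.prod μ) := by
  have hc : Continuous fun p : Euc n × β => g (p.1 + v p.2) := by fun_prop
  refine (integrable_prod_iff' hc.aestronglyMeasurable).2
    ⟨.of_forall fun p => hgi.comp_add_right (v p), ?_⟩
  simp_rw [fun p => integral_add_right_eq_self (μ := volume) (fun y => ‖g y‖) (v p)]
  exact integrable_const _

/-- For `n ≥ 3` and open bounded `Ω, Ω₁` with `closure Ω ⊂ Ω₁`, there is `C > 0`
such that for every `C¹` function `f` supported in `closure Ω`,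
`‖∇(Kf)‖_{L²(Ω₁)} ≤ C e^{C‖f‖_{C⁰}} ‖∇f‖_{L²(ℝⁿ)}`. -/
theorem singlePixel_gradient_estimate (n : ℕ) (hn : 3 ≤ n) (Ω Ω₁ : Set (Euc n))
    (hΩo : IsOpen Ω) (hΩb : Bornology.IsBounded Ω)
    (hΩ₁o : IsOpen Ω₁) (hΩ₁b : Bornology.IsBounded Ω₁) (hΩΩ₁ : closure Ω ⊆ Ω₁) :
    ∃ C > 0, ∀ f : Euc n → ℝ, ContDiff ℝ 1 f → Function.support f ⊆ closure Ω →
      (∫ x in Ω₁, ‖fderiv ℝ (singlePixel f) x‖ ^ 2) ^ ((1 : ℝ) / 2) ≤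
        C * Real.exp (C * ⨆ x : Euc n, |f x|) *
          (∫ x : Euc n, ‖fderiv ℝ f x‖ ^ 2) ^ ((1 : ℝ) / 2) := by
  obtain ⟨r, hr0, hr⟩ := hΩ₁b.subset_ball_lt 0 0
  set R := 2 * r with hR
  set μ := (sphereMeasure n).prod (volume.restrict (Icc (-R) R)) with hμ
  set m := μ.real univ with hm
  have hm0 : 0 ≤ m := measureReal_nonneg
  refine ⟨m + 2 * R + 1, by positivity, fun f hf hsupp => ?_⟩
  have hf' : Continuous (fderiv ℝ f) := hf.continuous_fderiv one_ne_zero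
  have hcs : HasCompactSupport f :=
    HasCompactSupport.of_support_subset_isCompact hΩb.isCompact_closure hsupp
  have hcs' : HasCompactSupport (fderiv ℝ f) := hcs.fderiv ℝ
  obtain ⟨B, hB⟩ := hcs.exists_bound_of_continuous hf.continuous
  obtain ⟨D, hD⟩ := hcs'.exists_bound_of_continuous hf'
  set M := ⨆ x : Euc n, |f x| with hMdef
  have hM : ∀ x, |f x| ≤ M := le_ciSup ⟨B, by rintro _ ⟨x, rfl⟩; exact hB x⟩
  have hM0 : 0 ≤ M := (abs_nonneg _).trans (hM 0)
  set g : Euc n → ℝ := fun x => ‖fderiv ℝ f x‖ with hg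
  have hgc : Continuous g := hf'.norm
  have hg2cs : HasCompactSupport fun x => g x ^ 2 := hcs'.mono' fun x hx => by
    refine subset_tsupport _ fun h0 => hx ?_
    simp only [hg, h0, norm_zero, ne_eq, OfNat.ofNat_ne_zero, not_false_eq_true, zero_pow]
  have hg2i : Integrable fun x => g x ^ 2 := (hgc.pow 2).integrable_of_hasCompactSupport hg2cs
  have hgD : ∀ x, ‖g x‖ ≤ D := fun x => by simpa [hg] using hD x
  let v : sphere (0 : Euc n) 1 × ℝ → Euc n := fun p => p.2 • (p.1 : Euc n)
  have hv : Continuous v := by fun_prop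
  have hint := integrable_prod_translate (μ := μ) hv (hgc.pow 2) hg2i
  have hpoint : ∀ x ∈ Ω₁, ‖fderiv ℝ (singlePixel f) x‖ ^ 2 ≤
      Real.exp (2 * R * M) ^ 2 * m * ∫ p, g (x + v p) ^ 2 ∂μ := by
    intro x hx
    have hcx : Continuous fun p => g (x + v p) := by fun_prop
    have hix : Integrable (fun p => g (x + v p)) μ :=
      Integrable.of_bound hcx.aestronglyMeasurable D (.of_forall fun p => hgD _)
    have hix2 : Integrable (fun p => g (x + v p) ^ 2) μ :=
      Integrable.of_bound (hcx.pow 2).aestronglyMeasurable (D ^ 2) (.of_forall fun p => by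
        rw [norm_pow]; exact pow_le_pow_left₀ (norm_nonneg _) (hgD _) 2)
    have h := norm_fderiv_singlePixel_le hf hM hD hr0.le
      ((hsupp.trans hΩΩ₁).trans hr) (hr hx)
    rw [← integral_prod (fun p : sphere (0 : Euc n) 1 × ℝ => g (x + v p)) hix] at h
    calc _ ≤ (Real.exp (2 * R * M) * ∫ p, g (x + v p) ∂μ) ^ 2 :=
          pow_le_pow_left₀ (norm_nonneg _) h 2
      _ = Real.exp (2 * R * M) ^ 2 * (∫ p, g (x + v p) ∂μ) ^ 2 := mul_pow _ _ _
      _ ≤ _ := by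
          rw [mul_assoc (Real.exp (2 * R * M) ^ 2)]
          exact mul_le_mul_of_nonneg_left
            (sq_integral_le_measureReal_mul_integral_sq hix hix2) (sq_nonneg _)
  have hswap : ∫ x, ∫ p, g (x + v p) ^ 2 ∂μ = m * ∫ x, g x ^ 2 := by
    rw [integral_integral_swap hint]
    simp_rw [fun p => integral_add_right_eq_self (μ := volume) (fun y => g y ^ 2) (v p)]
    rw [integral_const, smul_eq_mul]
  have hmain : ∫ x in Ω₁, ‖fderiv ℝ (singlePixel f) x‖ ^ 2 ≤
      (Real.exp (2 * R * M) * m) ^ 2 * ∫ x, g x ^ 2 := by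
    calc _ ≤ ∫ x in Ω₁, Real.exp (2 * R * M) ^ 2 * m * ∫ p, g (x + v p) ^ 2 ∂μ := by
          refine integral_mono_of_nonneg (.of_forall fun x => sq_nonneg _)
            (hint.integral_prod_left.const_mul _).integrableOn ?_
          exact (ae_restrict_iff' hΩ₁o.measurableSet).2 (.of_forall hpoint)
      _ ≤ ∫ x, Real.exp (2 * R * M) ^ 2 * m * ∫ p, g (x + v p) ^ 2 ∂μ :=
          setIntegral_le_integral (hint.integral_prod_left.const_mul _) (.of_forall fun x =>
            mul_nonneg (by positivity) (integral_nonneg fun p => sq_nonneg _))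
      _ = _ := by rw [integral_const_mul, hswap]; ring
  rw [← Real.sqrt_eq_rpow, ← Real.sqrt_eq_rpow]
  refine (Real.sqrt_le_sqrt hmain).trans ?_
  rw [Real.sqrt_mul (sq_nonneg _), Real.sqrt_sq (by positivity), mul_comm (Real.exp _)]
  gcongr
  · linarith
  · linarith
end

section
/- Let n ≥ 2, let Ω ⊂ ℝⁿ be an open bounded set contained in the closed ball of radius R centered at the origin, and let f₁, f₂ : ℝⁿ → ℝ be continuous, supported in the closure of Ω, with |f_j(x)| ≤ M for all x and j = 1,2. Define Rf(x,θ) := Σ_{m=2}^{∞} ((-1)^m/m!)(Xf(x,θ))^m. Then for every x ∈ ℝⁿ, | ∫_{S^{n-1}} ( Rf₁(x,θ) − Rf₂(x,θ) ) dθ | ≤ (e^{2RM} − 1) · ( X'X |f₁ − f₂| )(x). -/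
open MeasureTheory Metric Real

/-- Along a line with unit direction `θ`, the points of the closed ball of radius `R` have
parameters in an interval of length `2R`. -/
theorem abs_add_inner_le_of_norm_add_smul_le {E : Type*} [NormedAddCommGroup E]
    [InnerProductSpace ℝ E] {R s : ℝ} {x θ : E} (hθ : ‖θ‖ = 1) (h : ‖x + s • θ‖ ≤ R) :
    |s + inner ℝ x θ| ≤ R := by
  have h1 := abs_real_inner_le_norm (x + s • θ) θ
  rw [inner_add_left, real_inner_smul_left, real_inner_self_eq_norm_sq, hθ] at h1
  rw [add_comm]
  simpa using h1.trans (by simpa using h)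

theorem tsum_taylor_remainder_exp_neg (t : ℝ) :
    ∑' m : ℕ, (-1 : ℝ) ^ (m + 2) / (m + 2).factorial * t ^ (m + 2) = exp (-t) - 1 + t := by
  have h := NormedSpace.expSeries_div_hasSum_exp (-t)
  rw [← Real.exp_eq_exp_ℝ] at h
  have h2 := (hasSum_nat_add_iff' 2).mpr h
  simp only [Finset.sum_range_succ, Finset.sum_range_zero] at h2
  rw [show exp (-t) - 1 + t = exp (-t) - (0 + (-t) ^ 0 / (Nat.factorial 0 : ℝ) +
    (-t) ^ 1 / (Nat.factorial 1 : ℝ)) by simp; ring]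
  rw [← h2.tsum_eq]
  refine tsum_congr fun m => ?_
  rw [neg_pow t]
  ring

theorem abs_exp_neg_remainder_sub_le {T a b : ℝ} (ha : |a| ≤ T) (hb : |b| ≤ T) :
    |(exp (-a) - 1 + a) - (exp (-b) - 1 + b)| ≤ (exp T - 1) * |a - b| := by
  have hd : ∀ t ∈ Set.Icc (-T) T, HasDerivWithinAt (fun t : ℝ => exp (-t) - 1 + t)
      (exp (-t) * (-1) + 1) (Set.Icc (-T) T) t := fun t _ =>
    ((((hasDerivAt_neg t).exp).sub_const 1).add (hasDerivAt_id t)).hasDerivWithinAt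
  have hbd : ∀ t ∈ Set.Icc (-T) T, ‖exp (-t) * (-1) + 1‖ ≤ exp T - 1 := by
    intro t ht
    have h1 : exp (-t) ≤ exp T := exp_le_exp.mpr (by linarith [ht.1])
    have h2 : exp (-T) ≤ exp (-t) := exp_le_exp.mpr (by linarith [ht.2])
    have h3 := add_one_le_exp T
    have h4 := add_one_le_exp (-T)
    have h5 : exp T * exp (-T) = 1 := by rw [← exp_add]; simp
    have h6 : 0 < exp T := exp_pos T
    rw [Real.norm_eq_abs, abs_le]
    constructor
    · linarith
    · nlinarith [sq_nonneg (exp T - 1), exp_pos (-T)]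
  exact (convex_Icc (-T) T).norm_image_sub_le_of_norm_hasDerivWithin_le hd hbd
    (abs_le.mp hb) (abs_le.mp ha)

section Xray

variable {n : ℕ} {f g : Euc n → ℝ} {R M : ℝ} {x θ : Euc n}

theorem eq_zero_of_support_subset_closedBall
    (hs : Function.support f ⊆ closedBall 0 R) (hθ : ‖θ‖ = 1) {s : ℝ}
    (h : s ∉ Set.Icc (-inner ℝ x θ - R) (-inner ℝ x θ + R)) : f (x + s • θ) = 0 := by
  by_contra hne
  have h1 := abs_le.mp (abs_add_inner_le_of_norm_add_smul_le hθ
    (mem_closedBall_zero_iff.mp (hs hne)))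
  exact h ⟨by linarith [h1.1], by linarith [h1.2]⟩

theorem integrable_comp_line (hf : Continuous f)
    (hs : Function.support f ⊆ closedBall 0 R) (hθ : ‖θ‖ = 1) :
    Integrable fun s : ℝ => f (x + s • θ) :=
  Continuous.integrable_of_hasCompactSupport (by fun_prop)
    (HasCompactSupport.intro isCompact_Icc
      fun _ h => eq_zero_of_support_subset_closedBall hs hθ h)

theorem abs_Xray_le (hR : 0 ≤ R) (hs : Function.support f ⊆ closedBall 0 R)
    (hM : ∀ y, |f y| ≤ M) (hθ : ‖θ‖ = 1) : |Xray f x θ| ≤ 2 * R * M := by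
  rw [Xray, ← setIntegral_eq_integral_of_forall_compl_eq_zero
    fun _ h => eq_zero_of_support_subset_closedBall hs hθ h, ← Real.norm_eq_abs]
  refine (norm_setIntegral_le_of_norm_le_const (C := M) measure_Icc_lt_top
    fun s _ => hM _).trans_eq ?_
  rw [Real.volume_real_Icc_of_le (by linarith)]
  ring

theorem abs_Xray_sub_le (hf : Continuous f) (hg : Continuous g)
    (hsf : Function.support f ⊆ closedBall 0 R) (hsg : Function.support g ⊆ closedBall 0 R)
    (hθ : ‖θ‖ = 1) :
    |Xray f x θ - Xray g x θ| ≤ Xray (fun y => |f y - g y|) x θ := by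
  rw [Xray, Xray, ← integral_sub (integrable_comp_line hf hsf hθ)
    (integrable_comp_line hg hsg hθ)]
  exact abs_integral_le_integral_abs

theorem continuous_Xray_sphere (hf : Continuous f)
    (hs : Function.support f ⊆ closedBall 0 R) (x : Euc n) :
    Continuous fun θ : sphere (0 : Euc n) 1 => Xray f x θ := by
  have h : ∀ θ : sphere (0 : Euc n) 1, Xray f x θ =
      ∫ s in Set.Icc (-(‖x‖ + R)) (‖x‖ + R), f (x + s • (θ : Euc n)) := by
    intro θ
    have hθ : ‖(θ : Euc n)‖ = 1 := norm_eq_of_mem_sphere θ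
    refine (setIntegral_eq_integral_of_forall_compl_eq_zero fun s hs' =>
      eq_zero_of_support_subset_closedBall hs hθ fun hmem => hs' ?_).symm
    have h1 := abs_le.mp (abs_real_inner_le_norm x (θ : Euc n))
    rw [hθ, mul_one] at h1
    exact ⟨by linarith [h1.2, hmem.1], by linarith [h1.1, hmem.2]⟩
  simp_rw [h]
  exact continuous_parametric_integral_of_continuous (by fun_prop) isCompact_Icc

end Xray

/-- For `n ≥ 2`, `Ω` open bounded contained in the closed ball of radius `R`, and
`f₁, f₂` continuous, supported in `closure Ω`, bounded by `M`, the integrated Taylor remainders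
`Rf(x,θ) = Σ_{m=2}^∞ ((-1)^m/m!)(Xf(x,θ))^m` satisfy
`|∫_{S^{n-1}} (Rf₁ − Rf₂) dθ| ≤ (e^{2RM} − 1)(X'X|f₁ − f₂|)(x)`. -/
theorem remainder_difference_estimate (n : ℕ) (hn : 2 ≤ n) (R M : ℝ) (hR : 0 ≤ R)
    (Ω : Set (Euc n)) (hΩo : IsOpen Ω) (hΩb : Bornology.IsBounded Ω)
    (hΩR : Ω ⊆ Metric.closedBall 0 R)
    (f₁ f₂ : Euc n → ℝ) (hf₁ : Continuous f₁) (hf₂ : Continuous f₂)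
    (hs₁ : Function.support f₁ ⊆ closure Ω) (hs₂ : Function.support f₂ ⊆ closure Ω)
    (hM₁ : ∀ x, |f₁ x| ≤ M) (hM₂ : ∀ x, |f₂ x| ≤ M) (x : Euc n) :
    |∫ θ : sphere (0 : Euc n) 1,
        ((∑' m : ℕ, (-1 : ℝ) ^ (m + 2) / (m + 2).factorial * Xray f₁ x (θ : Euc n) ^ (m + 2)) -
         (∑' m : ℕ, (-1 : ℝ) ^ (m + 2) / (m + 2).factorial * Xray f₂ x (θ : Euc n) ^ (m + 2)))
        ∂(sphereMeasure n)| ≤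
      (Real.exp (2 * R * M) - 1) * normalOp (fun y => |f₁ y - f₂ y|) x := by
  have hcl : closure Ω ⊆ closedBall 0 R := closure_minimal hΩR isClosed_closedBall
  have hb₁ := hs₁.trans hcl
  have hb₂ := hs₂.trans hcl
  have hsd : Function.support (fun y => |f₁ y - f₂ y|) ⊆ closedBall 0 R := by
    intro y hy
    by_contra hny
    have h1 : f₁ y = 0 := by_contra fun h => hny (hb₁ h)
    have h2 : f₂ y = 0 := by_contra fun h => hny (hb₂ h)
    exact hy (by simp [h1, h2])
  have : IsFiniteMeasure (sphereMeasure n) := by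
    unfold sphereMeasure
    infer_instance
  have hint : Integrable (fun θ : sphere (0 : Euc n) 1 =>
      Xray (fun y => |f₁ y - f₂ y|) x (θ : Euc n)) (sphereMeasure n) :=
    (continuous_Xray_sphere (by fun_prop) hsd x).integrable_of_hasCompactSupport
      (HasCompactSupport.of_compactSpace _)
  have hM : 0 ≤ M := (abs_nonneg _).trans (hM₁ 0)
  rw [normalOp, ← integral_const_mul, ← Real.norm_eq_abs]
  refine norm_integral_le_of_norm_le (hint.const_mul _) (ae_of_all _ fun θ => ?_)
  have hθ : ‖(θ : Euc n)‖ = 1 := norm_eq_of_mem_sphere θ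
  rw [tsum_taylor_remainder_exp_neg, tsum_taylor_remainder_exp_neg]
  refine (abs_exp_neg_remainder_sub_le (abs_Xray_le hR hb₁ hM₁ hθ)
    (abs_Xray_le hR hb₂ hM₂ hθ)).trans ?_
  exact mul_le_mul_of_nonneg_left (abs_Xray_sub_le hf₁ hf₂ hb₁ hb₂ hθ)
    (sub_nonneg.mpr (one_le_exp (by positivity)))
end

section
/- Let n ≥ 3, let Ω ⊂ ℝⁿ be an open bounded set and let Ω₁ ⊂ ℝⁿ be an open bounded set with closure(Ω) ⊂ Ω₁. Then there exists a constant C > 0, independent of M, such that for every M > 0 and all continuously differentiable f₁, f₂ : ℝⁿ → ℝ supported in the closure of Ω with ‖f_j‖_{C¹(ℝⁿ)} ≤ M for j = 1,2, one has ‖Kf₁ − Kf₂‖_{H¹(Ω₁)} ≤ C (1 + e^{CM} + M e^{CM}) ‖f₁ − f₂‖_{L²(ℝⁿ)} + C (e^{CM} − 1) ‖∇(f₁ − f₂)‖_{L²(ℝⁿ)}. -/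
open MeasureTheory Metric Real

open scoped FourierTransform SchwartzMap ContDiff ENNReal

section SphereDecay

/-- An integral over the unit sphere is controlled by an integral over the unit ball. -/
theorem lintegral_toSphere_le {E : Type*} [NormedAddCommGroup E] [NormedSpace ℝ E]
    [MeasurableSpace E] [BorelSpace E] (μ : Measure E) {F : sphere (0 : E) 1 → ℝ≥0∞}
    (hF : Measurable F) {H : E → ℝ≥0∞} (hH : Measurable H)
    (hFH : ∀ (θ : sphere (0 : E) 1) (r : ℝ), 0 < r → r < 1 → F θ ≤ H (r • (θ : E))) :
    ∫⁻ θ, F θ ∂μ.toSphere ≤ Module.finrank ℝ E * ∫⁻ x in ball 0 1, H x ∂μ := by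
  have hg := (MeasurableEmbedding.subtype_coe (measurableSet_singleton (0 : E)).compl).comp
      (homeomorphUnitSphereProd E).symm.measurableEmbedding
  set g : sphere (0 : E) 1 × Set.Ioi (0 : ℝ) → E :=
    Subtype.val ∘ (homeomorphUnitSphereProd E).symm with hgdef
  have hgval : ∀ p, g p = (p.2 : ℝ) • (p.1 : E) := fun p => by simp [hgdef]
  have hms : MeasurableSet (Set.univ ×ˢ Set.Iio ⟨1, Set.mem_Ioi.2 one_pos⟩ :
      Set (sphere (0 : E) 1 × Set.Ioi (0 : ℝ))) := MeasurableSet.univ.prod measurableSet_Iio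
  have hHb : Measurable ((ball (0 : E) 1).indicator H) := hH.indicator measurableSet_ball
  rw [Measure.toSphere, lintegral_smul_measure, nsmul_eq_mul]
  gcongr
  rw [Measure.fst, lintegral_map hF measurable_fst, ← lintegral_indicator hms]
  calc _ ≤ ∫⁻ p, (ball (0 : E) 1).indicator H (g p) ∂(μ.comap g) := by
        refine lintegral_mono fun p => ?_
        by_cases hp : p ∈ (Set.univ ×ˢ Set.Iio ⟨1, Set.mem_Ioi.2 one_pos⟩ :
          Set (sphere (0 : E) 1 × Set.Ioi (0 : ℝ)))
        · have hp2 : (p.2 : ℝ) < 1 := hp.2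
          have hp0 : (0 : ℝ) < p.2 := p.2.2
          have hb : g p ∈ ball (0 : E) 1 := by
            rw [hgval, mem_ball_zero_iff, norm_smul, norm_eq_of_mem_sphere p.1]
            simpa [abs_of_pos hp0] using hp2
          rw [Set.indicator_of_mem hp, Set.indicator_of_mem hb, hgval]
          exact hFH _ _ hp0 hp2
        · simp [Set.indicator_of_notMem hp]
    _ = ∫⁻ x, (ball (0 : E) 1).indicator H x ∂((μ.comap g).map g) := by
        rw [hg.lintegral_map]
    _ ≤ ∫⁻ x, (ball (0 : E) 1).indicator H x ∂μ := by
        rw [hg.map_comap]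
        exact setLIntegral_le_lintegral _ _
    _ = _ := lintegral_indicator measurableSet_ball _

theorem lintegral_inv_one_add_sq_affine {a : ℝ} (ha : a ≠ 0) (c : ℝ) :
    ∫⁻ t : ℝ, ENNReal.ofReal (1 + (t * a + c) ^ 2)⁻¹ = ENNReal.ofReal (π / |a|) := by
  have hi : Integrable fun t : ℝ => (1 + (t * a + c) ^ 2)⁻¹ :=
    (integrable_inv_one_add_sq.comp_add_right c).comp_mul_right' ha
  rw [← ofReal_integral_eq_lintegral_ofReal hi (ae_of_all _ fun t => by positivity)]
  congr 1
  have h1 := Measure.integral_comp_mul_right (fun t : ℝ => (1 + (t + c) ^ 2)⁻¹) a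
  have h2 := integral_add_right_eq_self (μ := volume) (fun t : ℝ => (1 + t ^ 2)⁻¹) c
  rw [h1, h2, integral_univ_inv_one_add_sq, abs_inv, smul_eq_mul, div_eq_inv_mul]

theorem lintegral_ball_inv_one_add_inner_sq_le {m : ℕ} (ξ : Euc (m + 1)) (j : Fin (m + 1))
    (hj : ξ j ≠ 0) :
    ∫⁻ x in ball (0 : Euc (m + 1)) 1, ENNReal.ofReal (1 + inner ℝ x ξ ^ 2)⁻¹ ≤
      ENNReal.ofReal (π / |ξ j|) * volume (Set.Icc (-1 : Fin m → ℝ) 1) := by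
  have he := (volume_preserving_piFinSuccAbove (fun _ : Fin (m + 1) => ℝ) j).comp
    (EuclideanSpace.volume_preserving_symm_measurableEquiv_toLp (Fin (m + 1)))
  let Φ : ℝ × (Fin m → ℝ) → ℝ≥0∞ := fun p =>
    (Set.Icc (-1 : Fin m → ℝ) 1).indicator 1 p.2 *
      ENNReal.ofReal (1 + (p.1 * ξ j + ∑ i, p.2 i * ξ (j.succAbove i)) ^ 2)⁻¹
  have hΦ : Measurable Φ := by
    refine Measurable.mul ?_ (by fun_prop)
    exact (measurable_one.indicator measurableSet_Icc).comp measurable_snd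
  rw [← lintegral_indicator measurableSet_ball]
  calc _ ≤ ∫⁻ x, Φ (((MeasurableEquiv.piFinSuccAbove (fun _ : Fin (m + 1) => ℝ) j) ∘
            (MeasurableEquiv.toLp 2 (Fin (m + 1) → ℝ)).symm) x) := by
        refine lintegral_mono fun x => ?_
        by_cases hx : x ∈ ball (0 : Euc (m + 1)) 1
        · rw [Set.indicator_of_mem hx]
          have hx1 : ∀ i, |x i| ≤ 1 := fun i =>
            (PiLp.norm_apply_le x i).trans (mem_ball_zero_iff.1 hx).le
          have hmem : (fun i => x (j.succAbove i)) ∈ Set.Icc (-1 : Fin m → ℝ) 1 :=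
            ⟨fun i => (abs_le.1 (hx1 _)).1, fun i => (abs_le.1 (hx1 _)).2⟩
          have hin : inner ℝ x ξ = x j * ξ j + ∑ i, x (j.succAbove i) * ξ (j.succAbove i) := by
            rw [PiLp.inner_apply, Fin.sum_univ_succAbove _ j]
            simp [mul_comm]
          change _ ≤ (Set.Icc (-1 : Fin m → ℝ) 1).indicator 1 (fun i => x (j.succAbove i)) *
            ENNReal.ofReal (1 + (x j * ξ j + ∑ i, x (j.succAbove i) * ξ (j.succAbove i)) ^ 2)⁻¹
          rw [Set.indicator_of_mem hmem, hin]
          simp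
        · simp [Set.indicator_of_notMem hx]
    _ = ∫⁻ p, Φ p := he.lintegral_comp hΦ
    _ = ∫⁻ y, ∫⁻ t, Φ (t, y) := by
        rw [Measure.volume_eq_prod, lintegral_prod_symm _ hΦ.aemeasurable]
    _ = ∫⁻ y, (Set.Icc (-1 : Fin m → ℝ) 1).indicator 1 y * ENNReal.ofReal (π / |ξ j|) := by
        refine lintegral_congr fun y => ?_
        simp only [Φ]
        rw [lintegral_const_mul _ (by fun_prop), lintegral_inv_one_add_sq_affine hj]
    _ = _ := by
        rw [lintegral_mul_const _ (measurable_one.indicator measurableSet_Icc),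
          lintegral_indicator_one measurableSet_Icc, mul_comm]

/-- Averages over the sphere of a function of `θ ↦ ⟪θ, ξ⟫` with quadratic decay
decay like `‖ξ‖⁻¹`. -/
theorem exists_norm_mul_integral_sphere_le (n : ℕ) :
    ∃ C : ℝ, 0 ≤ C ∧ ∀ ξ : Euc n,
      ‖ξ‖ * ∫ θ : sphere (0 : Euc n) 1, (1 + inner ℝ (θ : Euc n) ξ ^ 2)⁻¹ ∂(sphereMeasure n)
        ≤ C := by
  obtain _ | m := n
  · exact ⟨0, le_rfl, fun ξ => by simp [Subsingleton.elim ξ 0]⟩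
  set V := (volume (Set.Icc (-1 : Fin m → ℝ) 1)).toReal
  have hV : volume (Set.Icc (-1 : Fin m → ℝ) 1) ≠ ⊤ := isCompact_Icc.measure_lt_top.ne
  refine ⟨(m + 1) * (m + 1) * π * V, by positivity, fun ξ => ?_⟩
  by_cases hξ : ξ = 0
  · rw [hξ, norm_zero, zero_mul]; positivity
  obtain ⟨j, -, hj⟩ := Finset.exists_max_image Finset.univ (fun i => |ξ i|) Finset.univ_nonempty
  have hnorm : ‖ξ‖ ≤ (m + 1) * |ξ j| := by
    have h1 : ‖ξ‖ ≤ ∑ i, |ξ i| := by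
      rw [EuclideanSpace.norm_eq]
      refine Real.sqrt_le_iff.2 ⟨by positivity, ?_⟩
      exact Finset.sum_sq_le_sq_sum_of_nonneg fun i _ => abs_nonneg _
    refine h1.trans ((Finset.sum_le_card_nsmul _ _ _ hj).trans (by simp))
  have hj0 : 0 < |ξ j| := by
    have : 0 < ‖ξ‖ := norm_pos_iff.2 hξ
    by_contra h
    have : |ξ j| = 0 := le_antisymm (not_lt.1 h) (abs_nonneg _)
    rw [this] at hnorm
    linarith
  have hcont : Continuous fun θ : sphere (0 : Euc (m + 1)) 1 =>
      (1 + inner ℝ (θ : Euc (m + 1)) ξ ^ 2)⁻¹ :=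
    Continuous.inv₀ (by fun_prop) fun θ => by positivity
  have hbound := lintegral_toSphere_le (volume : Measure (Euc (m + 1)))
    (F := fun θ => ENNReal.ofReal (1 + inner ℝ (θ : Euc (m + 1)) ξ ^ 2)⁻¹)
    (hcont.measurable.ennreal_ofReal)
    (H := fun x => ENNReal.ofReal (1 + inner ℝ x ξ ^ 2)⁻¹) (by fun_prop) (by
      intro θ r hr0 hr1
      refine ENNReal.ofReal_le_ofReal (inv_anti₀ (by positivity) ?_)
      rw [inner_smul_left, RCLike.conj_to_real, mul_pow]
      have : r ^ 2 ≤ 1 := by nlinarith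
      nlinarith [sq_nonneg (inner ℝ (θ : Euc (m + 1)) ξ)])
  have hle := hbound.trans (mul_le_mul_right
    (lintegral_ball_inv_one_add_inner_sq_le ξ j (abs_pos.1 hj0)) _)
  have hint : ∫ θ : sphere (0 : Euc (m + 1)) 1, (1 + inner ℝ (θ : Euc (m + 1)) ξ ^ 2)⁻¹
      ∂(sphereMeasure (m + 1)) ≤ (m + 1) * (π / |ξ j| * V) := by
    rw [integral_eq_lintegral_of_nonneg_ae (ae_of_all _ fun θ => by positivity)
      hcont.aestronglyMeasurable]
    refine (ENNReal.toReal_mono ?_ hle).trans_eq ?_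
    · exact ENNReal.mul_ne_top (by simp) (ENNReal.mul_ne_top ENNReal.ofReal_ne_top hV)
    · rw [ENNReal.toReal_mul, ENNReal.toReal_mul, ENNReal.toReal_ofReal (by positivity),
        finrank_euclideanSpace_fin, ENNReal.toReal_natCast]
      push_cast
      rfl
  calc _ ≤ ((m + 1) * |ξ j|) * ((m + 1) * (π / |ξ j| * V)) := by gcongr
    _ = _ := by field_simp

end SphereDecay

section Plancherel

variable {E : Type*} [NormedAddCommGroup E] [InnerProductSpace ℝ E] [FiniteDimensional ℝ E]
  [MeasurableSpace E] [BorelSpace E]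

/-- On `L¹ ∩ L²` the `L²` Fourier transform is given by the Fourier integral. -/
theorem coeFn_fourier_toLp_two {f : E → ℂ} (h1 : Integrable f) (h2 : MemLp f 2) :
    ⇑(𝓕 h2.toLp : Lp (α := E) ℂ 2 volume) =ᵐ[volume] 𝓕 f := by
  have hcont : Continuous (𝓕 f) :=
    VectorFourier.fourierIntegral_continuous Real.continuous_fourierChar
      (by exact continuous_inner) h1
  refine ae_eq_of_integral_contDiff_smul_eq
    ((Lp.memLp _).locallyIntegrable (by norm_num)) hcont.locallyIntegrable fun g hg hgs => ?_
  have hgs' : HasCompactSupport (fun x => (g x : ℂ)) :=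
    hgs.comp_left (g := fun t : ℝ => (t : ℂ)) (by simp)
  let G : 𝓢(E, ℂ) := hgs'.toSchwartzMap (Complex.ofRealCLM.contDiff.comp hg)
  have hG : ∀ x, G x = (g x : ℂ) := fun x => rfl
  have key := congrArg (fun T => T G) (Lp.fourier_toTemperedDistribution_eq (h2.toLp))
  simp only [TemperedDistribution.fourier_apply, Lp.toTemperedDistribution_apply] at key
  have hflip : ∫ ξ, 𝓕 (G : E → ℂ) ξ • f ξ = ∫ x, G x • 𝓕 f x := by
    have := VectorFourier.integral_fourierIntegral_smul_eq_flip (L := innerₗ E)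
      (μ := volume) (ν := volume) Real.continuous_fourierChar
      (by exact continuous_inner) G.integrable h1
    rw [flip_innerₗ] at this
    exact this
  calc ∫ x, g x • (𝓕 h2.toLp : Lp (α := E) ℂ 2 volume) x
      = ∫ x, G x • (𝓕 h2.toLp : Lp (α := E) ℂ 2 volume) x := by simp [hG]
    _ = ∫ x, (𝓕 G) x • (h2.toLp : Lp (α := E) ℂ 2 volume) x := key.symm
    _ = ∫ ξ, 𝓕 (G : E → ℂ) ξ • f ξ := by
      refine integral_congr_ae ?_
      filter_upwards [h2.coeFn_toLp] with x hx
      rw [hx, SchwartzMap.fourier_coe]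
    _ = ∫ x, G x • 𝓕 f x := hflip
    _ = _ := by simp [hG]

/-- The Fourier integral of a function in `L¹ ∩ L²` is square integrable. -/
theorem integrable_sq_fourier {f : E → ℂ} (h1 : Integrable f) (h2 : MemLp f 2) :
    Integrable (fun ξ => ‖𝓕 f ξ‖ ^ 2) := by
  have := (Lp.memLp (𝓕 h2.toLp : Lp (α := E) ℂ 2 volume)).ae_eq (coeFn_fourier_toLp_two h1 h2)
  exact (memLp_two_iff_integrable_sq_norm this.1).1 this

/-- Plancherel's theorem for functions in `L¹ ∩ L²`. -/
theorem integral_sq_fourier {f : E → ℂ} (h1 : Integrable f) (h2 : MemLp f 2) :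
    ∫ ξ, ‖𝓕 f ξ‖ ^ 2 = ∫ x, ‖f x‖ ^ 2 := by
  have h3 := (Lp.memLp (𝓕 h2.toLp : Lp (α := E) ℂ 2 volume)).ae_eq (coeFn_fourier_toLp_two h1 h2)
  have hn := Lp.norm_fourier_eq (h2.toLp)
  rw [Lp.norm_def, Lp.norm_def, eLpNorm_congr_ae h2.coeFn_toLp,
    eLpNorm_congr_ae (coeFn_fourier_toLp_two h1 h2),
    h3.eLpNorm_eq_integral_rpow_norm (by norm_num) (by norm_num),
    h2.eLpNorm_eq_integral_rpow_norm (by norm_num) (by norm_num)] at hn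
  simp only [ENNReal.toReal_ofNat, rpow_ofNat] at hn
  rw [ENNReal.toReal_ofReal (by positivity), ENNReal.toReal_ofReal (by positivity)] at hn
  exact (Real.rpow_left_inj (by positivity) (by positivity) (by norm_num)).1 hn

end Plancherel

section Cutoff

/-- A finite measure on the line that coincides with Lebesgue measure on `[-T, T]` and whose
Fourier transform has quadratic decay. -/
theorem exists_cutoff_measure (T : ℝ) (hT : 0 < T) :
    ∃ ν : Measure ℝ, IsFiniteMeasure ν ∧
      (∀ f : ℝ → ℝ, (∀ s, T < |s| → f s = 0) → ∫ s, f s ∂ν = ∫ s, f s) ∧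
      ∃ A : ℝ, 0 ≤ A ∧ ∀ t : ℝ, ‖∫ s, (𝐞 (s * t) : ℂ) ∂ν‖ ≤ A * (1 + t ^ 2)⁻¹ := by
  let χ : ContDiffBump (0 : ℝ) := ⟨T, T + 1, hT, by linarith⟩
  have hχint : Integrable χ := χ.continuous.integrable_of_hasCompactSupport χ.hasCompactSupport
  have hm : Measurable fun s => ENNReal.ofReal (χ s) := χ.continuous.measurable.ennreal_ofReal
  have hdens : ∀ {F : Type} [NormedAddCommGroup F] [NormedSpace ℝ F] (f : ℝ → F),
      ∫ s, f s ∂(volume.withDensity fun s => ENNReal.ofReal (χ s)) = ∫ s, χ s • f s := by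
    intro F _ _ f
    rw [integral_withDensity_eq_integral_toReal_smul hm (by simp)]
    simp [ENNReal.toReal_ofReal χ.nonneg]
  refine ⟨volume.withDensity fun s => ENNReal.ofReal (χ s),
    isFiniteMeasure_withDensity_ofReal hχint.2, fun f hf => ?_, ?_⟩
  · rw [hdens]
    refine integral_congr_ae (ae_of_all _ fun s => ?_)
    by_cases hs : T < |s|
    · simp [hf s hs]
    · have : χ s = 1 := χ.one_of_mem_closedBall (by simpa [χ] using not_lt.1 hs)
      simp [this]
  · have hcs : HasCompactSupport (fun x => (χ x : ℂ)) :=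
      χ.hasCompactSupport.comp_left (g := fun t : ℝ => (t : ℂ)) (by simp)
    let G : 𝓢(ℝ, ℂ) := hcs.toSchwartzMap (Complex.ofRealCLM.contDiff.comp χ.contDiff)
    obtain ⟨C₀, hC₀, h₀⟩ := (𝓕 G).decay 0 0
    obtain ⟨C₂, hC₂, h₂⟩ := (𝓕 G).decay 2 0
    refine ⟨C₀ + C₂, by positivity, fun t => ?_⟩
    have hFt : ∫ s, (𝐞 (s * t) : ℂ) ∂(volume.withDensity fun s => ENNReal.ofReal (χ s)) =
        (𝓕 G) (-t) := by
      rw [hdens, SchwartzMap.fourier_coe, Real.fourier_real_eq]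
      refine integral_congr_ae (ae_of_all _ fun s => ?_)
      change (χ s) • (𝐞 (s * t) : ℂ) = 𝐞 (-(s * -t)) • (χ s : ℂ)
      rw [Circle.smul_def, mul_neg, neg_neg, smul_eq_mul,
        Complex.real_smul, mul_comm]
    rw [hFt]
    have e₀ := h₀ (-t)
    have e₂ := h₂ (-t)
    simp only [norm_iteratedFDeriv_zero, pow_zero, one_mul, norm_neg, Real.norm_eq_abs,
      sq_abs] at e₀ e₂
    rw [← div_eq_mul_inv, le_div_iff₀ (by positivity)]
    linarith

end Cutoff

section Averaging

variable {E : Type*} [NormedAddCommGroup E] [InnerProductSpace ℝ E] [FiniteDimensional ℝ E]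
  [MeasurableSpace E] [BorelSpace E] {Z : Type*} [MeasurableSpace Z] {ρ : Measure Z}
  [IsFiniteMeasure ρ] {a : Z → E}

theorem integrable_prod_translate_s16 {F : Type*} [NormedAddCommGroup F] {g : E → F}
    (hg : Continuous g) (hgi : Integrable g) (ha : Measurable a) :
    Integrable (fun p : E × Z => g (p.1 + a p.2)) (volume.prod ρ) := by
  have : SecondCountableTopologyEither E F := inferInstance
  have hmeas : AEStronglyMeasurable (fun p : E × Z => g (p.1 + a p.2)) (volume.prod ρ) :=
    (hg.stronglyMeasurable.comp_measurable
      (measurable_fst.add (ha.comp measurable_snd))).aestronglyMeasurable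
  refine (integrable_prod_iff' hmeas).2 ⟨ae_of_all _ fun z => hgi.comp_add_right (a z), ?_⟩
  have : ∀ z, ∫ x, ‖g (x + a z)‖ = ∫ x, ‖g x‖ := fun z =>
    integral_add_right_eq_self (fun x => ‖g x‖) (a z)
  simp only [this]
  exact integrable_const _

theorem integrable_translate {F : Type*} [NormedAddCommGroup F] {g : E → F}
    (hg : Continuous g) (hgs : HasCompactSupport g) (ha : Measurable a) (x : E) :
    Integrable (fun z => g (x + a z)) ρ := by
  obtain ⟨C, hC⟩ := hg.bounded_above_of_compact_support hgs
  refine Integrable.of_bound (C := C) ?_ (ae_of_all _ fun z => hC _)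
  exact (hg.stronglyMeasurable.comp_measurable (ha.const_add x)).aestronglyMeasurable

theorem sq_integral_le_measure_mul {g : Z → ℝ} (hg : Integrable g ρ)
    (hg2 : Integrable (fun z => g z ^ 2) ρ) :
    (∫ z, g z ∂ρ) ^ 2 ≤ ρ.real Set.univ * ∫ z, g z ^ 2 ∂ρ := by
  set c := ρ.real Set.univ with hc
  set S := ∫ z, g z ∂ρ with hS
  obtain h0 | h0 := (measureReal_nonneg : 0 ≤ ρ.real Set.univ).eq_or_lt
  · have : ρ = 0 := by
      rw [← Measure.measure_univ_eq_zero]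
      exact (measureReal_eq_zero_iff).1 h0.symm
    simp [hS, this]
  · have hnn : 0 ≤ ∫ z, (c * g z - S) ^ 2 ∂ρ := integral_nonneg fun z => sq_nonneg _
    have hexp : ∫ z, (c * g z - S) ^ 2 ∂ρ = c * (c * ∫ z, g z ^ 2 ∂ρ - S ^ 2) := by
      have : ∀ z, (c * g z - S) ^ 2 = c ^ 2 * g z ^ 2 - (2 * c * S) * g z + S ^ 2 := fun z => by ring
      simp only [this]
      have hsub : Integrable (fun z => c ^ 2 * g z ^ 2 - (2 * c * S) * g z) ρ :=
        (hg2.const_mul _).sub (hg.const_mul _)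
      rw [integral_add hsub (integrable_const _), integral_sub (hg2.const_mul _) (hg.const_mul _),
        integral_const_mul, integral_const_mul, integral_const, smul_eq_mul, ← hS, ← hc]
      ring
    rw [hexp] at hnn
    have := nonneg_of_mul_nonneg_right hnn h0
    linarith

theorem HasCompactSupport.sq_real {X : Type*} [TopologicalSpace X] {g : X → ℝ}
    (hgs : HasCompactSupport g) : HasCompactSupport fun x => g x ^ 2 := by
  refine hgs.mono fun x hx => ?_
  contrapose! hx
  simp_all

theorem integrable_sq_of_hasCompactSupport {g : E → ℝ} (hg : Continuous g)
    (hgs : HasCompactSupport g) : Integrable (fun x => g x ^ 2) volume :=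
  (hg.pow 2).integrable_of_hasCompactSupport hgs.sq_real

theorem integrable_prod_translate_sq {g : E → ℝ} (hg : Continuous g) (hgs : HasCompactSupport g)
    (ha : Measurable a) :
    Integrable (fun p : E × Z => g (p.1 + a p.2) ^ 2) (volume.prod ρ) :=
  integrable_prod_translate_s16 (g := fun x => g x ^ 2) (hg.pow 2)
    (integrable_sq_of_hasCompactSupport hg hgs) ha

theorem sq_average_le {g : E → ℝ} (hg : Continuous g) (hgs : HasCompactSupport g)
    (ha : Measurable a) (x : E) :
    (∫ z, g (x + a z) ∂ρ) ^ 2 ≤ ρ.real Set.univ * ∫ z, g (x + a z) ^ 2 ∂ρ :=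
  sq_integral_le_measure_mul (integrable_translate hg hgs ha x)
    (integrable_translate (g := fun x => g x ^ 2) (hg.pow 2) hgs.sq_real ha x)

theorem integrable_sq_average {g : E → ℝ} (hg : Continuous g) (hgs : HasCompactSupport g)
    (ha : Measurable a) : Integrable (fun x => (∫ z, g (x + a z) ∂ρ) ^ 2) volume := by
  have h1 := (integrable_prod_translate_s16 (ρ := ρ) hg
    (hg.integrable_of_hasCompactSupport hgs) ha).integral_prod_left
  have h2 := (integrable_prod_translate_sq (ρ := ρ) hg hgs ha).integral_prod_left
  refine (h2.const_mul (ρ.real Set.univ)).mono' (h1.1.pow 2) (ae_of_all _ fun x => ?_)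
  rw [Real.norm_of_nonneg (sq_nonneg _)]
  exact sq_average_le hg hgs ha x

/-- Averaging translates against a finite measure is bounded on `L²`. -/
theorem integral_sq_average_le {g : E → ℝ} (hg : Continuous g) (hgs : HasCompactSupport g)
    (ha : Measurable a) :
    ∫ x, (∫ z, g (x + a z) ∂ρ) ^ 2 ≤ ρ.real Set.univ ^ 2 * ∫ x, g x ^ 2 := by
  have hint := integrable_prod_translate_sq (ρ := ρ) hg hgs ha
  calc ∫ x, (∫ z, g (x + a z) ∂ρ) ^ 2
      ≤ ∫ x, ρ.real Set.univ * ∫ z, g (x + a z) ^ 2 ∂ρ :=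
        integral_mono (integrable_sq_average hg hgs ha)
          (hint.integral_prod_left.const_mul _) fun x => sq_average_le hg hgs ha x
    _ = ρ.real Set.univ * ∫ z, (∫ x, g (x + a z) ^ 2) ∂ρ := by
        rw [integral_const_mul, integral_integral_swap hint]
    _ = _ := by
        have : ∀ z, ∫ x, g (x + a z) ^ 2 = ∫ x, g x ^ 2 := fun z =>
          integral_add_right_eq_self (fun x => g x ^ 2) (a z)
        simp only [this, integral_const, smul_eq_mul]
        ring

theorem fourier_average {g : E → ℂ} (hg : Continuous g) (hgi : Integrable g)
    (ha : Measurable a) (ξ : E) :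
    𝓕 (fun x => ∫ z, g (x + a z) ∂ρ) ξ = (∫ z, (𝐞 (inner ℝ (a z) ξ) : ℂ) ∂ρ) * 𝓕 g ξ := by
  have hint := integrable_prod_translate_s16 (ρ := ρ) hg hgi ha
  have hint' : Integrable (fun p : E × Z => 𝐞 (-inner ℝ p.1 ξ) • g (p.1 + a p.2))
      (volume.prod ρ) := by
    refine hint.mono ?_ (ae_of_all _ fun p => (Circle.norm_smul _ _).le)
    have : Continuous fun p : E × E => 𝐞 (-inner ℝ p.1 ξ) • g p.2 := by
      have := Real.continuous_fourierChar
      fun_prop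
    exact (this.stronglyMeasurable.comp_measurable (measurable_fst.prodMk
      (measurable_fst.add (ha.comp measurable_snd)))).aestronglyMeasurable
  calc 𝓕 (fun x => ∫ z, g (x + a z) ∂ρ) ξ
      = ∫ x, ∫ z, 𝐞 (-inner ℝ x ξ) • g (x + a z) ∂ρ := by
        rw [Real.fourier_eq]
        simp only [Circle.smul_def, integral_smul]
    _ = ∫ z, (∫ x, 𝐞 (-inner ℝ x ξ) • g (x + a z)) ∂ρ := integral_integral_swap hint'
    _ = ∫ z, (𝐞 (inner ℝ (a z) ξ) : ℂ) * 𝓕 g ξ ∂ρ := by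
        refine integral_congr_ae (ae_of_all _ fun z => ?_)
        have h1 := integral_add_right_eq_self (μ := volume)
          (fun y => 𝐞 (-inner ℝ (y - a z) ξ) • g y) (a z)
        simp only [add_sub_cancel_right] at h1
        refine h1.trans ?_
        rw [Real.fourier_eq]
        refine Eq.trans ?_ (integral_const_mul _ _)
        refine integral_congr_ae (ae_of_all _ fun y => ?_)
        have h2 : -inner ℝ (y - a z) ξ = inner ℝ (a z) ξ + -inner ℝ y ξ := by
          rw [inner_sub_left]
          ring
        simp only [h2, AddChar.map_add_eq_mul,
          Circle.smul_def, Circle.coe_mul, smul_eq_mul]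
        ring
    _ = _ := integral_mul_const _ _

/-- If the symbol of an averaging operator decays like `‖ξ‖⁻¹`, the operator gains one derivative
on `L²`. -/
theorem integral_sq_average_fderiv_le {D : ℝ} (ha : Measurable a)
    (hD : ∀ ξ, ‖ξ‖ * ‖∫ z, (𝐞 (inner ℝ (a z) ξ) : ℂ) ∂ρ‖ ≤ D)
    {h : E → ℝ} (hh : ContDiff ℝ 1 h) (hs : HasCompactSupport h) (v : E) :
    ∫ x, (∫ z, fderiv ℝ h (x + a z) v ∂ρ) ^ 2 ≤ (2 * π * ‖v‖ * D) ^ 2 * ∫ x, h x ^ 2 := by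
  set H : E → ℂ := fun x => (h x : ℂ) with hHdef
  have hHc : ContDiff ℝ 1 H := Complex.ofRealCLM.contDiff.comp hh
  have hHs : HasCompactSupport H := hs.comp_left (g := fun t : ℝ => (t : ℂ)) (by simp)
  have hHi : Integrable H := hHc.continuous.integrable_of_hasCompactSupport hHs
  have hH2 : MemLp H 2 := hHc.continuous.memLp_of_hasCompactSupport hHs
  have hdc : Continuous (fderiv ℝ H) := hHc.continuous_fderiv (by norm_num)
  have hdi : Integrable (fderiv ℝ H) :=
    hdc.integrable_of_hasCompactSupport (hHs.fderiv ℝ)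
  set g : E → ℝ := fun x => fderiv ℝ h x v with hgdef
  have hgc : Continuous g := (hh.continuous_fderiv (by norm_num)).clm_apply continuous_const
  have hgs : HasCompactSupport g := hs.fderiv_apply ℝ v
  set G : E → ℂ := fun x => (g x : ℂ) with hGdef
  have hGc : Continuous G := Complex.continuous_ofReal.comp hgc
  have hGs : HasCompactSupport G := hgs.comp_left (g := fun t : ℝ => (t : ℂ)) (by simp)
  have hGi : Integrable G := hGc.integrable_of_hasCompactSupport hGs
  have hGH : ∀ x, G x = fderiv ℝ H x v := fun x => by
    have h1 : HasFDerivAt h (fderiv ℝ h x) x := (hh.differentiable (by norm_num) x).hasFDerivAt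
    have h2 : HasFDerivAt H (Complex.ofRealCLM.comp (fderiv ℝ h x)) x :=
      Complex.ofRealCLM.hasFDerivAt.comp x h1
    rw [h2.fderiv]
    rfl
  have hFG : ∀ ξ, ‖𝓕 G ξ‖ = 2 * π * |inner ℝ v ξ| * ‖𝓕 H ξ‖ := fun ξ => by
    have h1 : 𝓕 G ξ = (𝓕 (fderiv ℝ H) ξ) v := by
      rw [Real.fourier_eq, Real.fourier_eq,
        ContinuousLinearMap.integral_apply (by
          simpa using (Real.fourierIntegral_convergent_iff ξ).2 hdi)]
      simp only [hGH]
      rfl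
    rw [h1, Real.fourier_fderiv hHi (hHc.differentiable (by norm_num)) hdi]
    have h2 : (innerSL ℝ ξ) v = inner ℝ v ξ := real_inner_comm v ξ
    simp only [VectorFourier.fourierSMulRight_apply, norm_smul, neg_apply, norm_neg,
      Real.norm_eq_abs, h2]
    simp [abs_of_pos pi_pos]
    ring
  set u : E → ℂ := fun x => ∫ z, G (x + a z) ∂ρ with hudef
  have hure : ∀ x, u x = ((∫ z, g (x + a z) ∂ρ : ℝ) : ℂ) := fun x => integral_ofReal
  have hui : Integrable u := (integrable_prod_translate_s16 hGc hGi ha).integral_prod_left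
  have hu2 : MemLp u 2 := by
    refine (memLp_two_iff_integrable_sq_norm hui.1).2 ?_
    simpa [hure] using integrable_sq_average (ρ := ρ) hgc hgs ha
  have hFu : ∀ ξ, ‖𝓕 u ξ‖ ^ 2 ≤ (2 * π * ‖v‖ * D) ^ 2 * ‖𝓕 H ξ‖ ^ 2 := fun ξ => by
    rw [← mul_pow]
    refine pow_le_pow_left₀ (norm_nonneg _) ?_ 2
    rw [hudef, fourier_average hGc hGi ha, norm_mul, hFG]
    set m := ‖∫ z, (𝐞 (inner ℝ (a z) ξ) : ℂ) ∂ρ‖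
    calc m * (2 * π * |inner ℝ v ξ| * ‖𝓕 H ξ‖)
        ≤ m * (2 * π * (‖v‖ * ‖ξ‖) * ‖𝓕 H ξ‖) := by
          gcongr
          exact abs_real_inner_le_norm v ξ
      _ = 2 * π * ‖v‖ * (‖ξ‖ * m) * ‖𝓕 H ξ‖ := by ring
      _ ≤ _ := by
          gcongr
          exact hD ξ
  calc ∫ x, (∫ z, g (x + a z) ∂ρ) ^ 2 = ∫ x, ‖u x‖ ^ 2 := by simp [hure]
    _ = ∫ ξ, ‖𝓕 u ξ‖ ^ 2 := (integral_sq_fourier hui hu2).symm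
    _ ≤ ∫ ξ, (2 * π * ‖v‖ * D) ^ 2 * ‖𝓕 H ξ‖ ^ 2 :=
        integral_mono (integrable_sq_fourier hui hu2)
          ((integrable_sq_fourier hHi hH2).const_mul _) hFu
    _ = (2 * π * ‖v‖ * D) ^ 2 * ∫ x, ‖H x‖ ^ 2 := by
        rw [integral_const_mul, integral_sq_fourier hHi hH2]
    _ = _ := by simp [H]

end Averaging

section RayAverage

variable {n : ℕ} {F : Type*} [NormedAddCommGroup F] [NormedSpace ℝ F] {ν : Measure ℝ}

/-- The average of `g` along the line through `x` in direction `θ` with weight `ν`. -/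
noncomputable def rayAverage (ν : Measure ℝ) (g : Euc n → F) (x θ : Euc n) : F :=
  ∫ s, g (x + s • θ) ∂ν

instance isFiniteMeasure_sphereMeasure (n : ℕ) : IsFiniteMeasure (sphereMeasure n) := by
  unfold sphereMeasure
  infer_instance

theorem continuous_rayAverage [IsFiniteMeasure ν] {g : Euc n → F} (hg : Continuous g)
    (hgs : HasCompactSupport g) (x : Euc n) :
    Continuous fun θ : Euc n => rayAverage ν g x θ := by
  obtain ⟨C, hC⟩ := hg.bounded_above_of_compact_support hgs
  refine continuous_of_dominated (bound := fun _ => C) (fun θ => ?_)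
    (fun θ => ae_of_all _ fun s => hC _) (integrable_const _) (ae_of_all _ fun _ => by fun_prop)
  exact (show Continuous fun s : ℝ => g (x + s • θ) by fun_prop).aestronglyMeasurable

theorem integrable_ray {E : Type*} [NormedAddCommGroup E] [IsFiniteMeasure ν] {g : Euc n → E}
    (hg : Continuous g) (hgs : HasCompactSupport g) (x θ : Euc n) :
    Integrable (fun s => g (x + s • θ)) ν :=
  integrable_translate hg hgs (by fun_prop) x

theorem integrable_rayAverage [IsFiniteMeasure ν] {g : Euc n → F} (hg : Continuous g)
    (hgs : HasCompactSupport g) (x : Euc n) :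
    Integrable (fun θ : sphere (0 : Euc n) 1 => rayAverage ν g x θ) (sphereMeasure n) :=
  ((continuous_rayAverage hg hgs x).comp continuous_subtype_val).integrable_of_hasCompactSupport
    (HasCompactSupport.of_compactSpace _)

theorem norm_rayAverage_le [IsFiniteMeasure ν] {g : Euc n → F} {M : ℝ} (hM : ∀ x, ‖g x‖ ≤ M)
    (x θ : Euc n) : ‖rayAverage ν g x θ‖ ≤ M * ν.real Set.univ :=
  norm_integral_le_of_norm_le_const (ae_of_all _ fun _ => hM _)

theorem norm_rayAverage_le_rayAverage_norm (g : Euc n → F) (x θ : Euc n) :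
    ‖rayAverage ν g x θ‖ ≤ rayAverage ν (fun y => ‖g y‖) x θ :=
  norm_integral_le_integral_norm _

theorem integral_rayAverage_eq [IsFiniteMeasure ν] {g : Euc n → F} (hg : Continuous g)
    (hgs : HasCompactSupport g) (x : Euc n) :
    ∫ θ : sphere (0 : Euc n) 1, rayAverage ν g x θ ∂(sphereMeasure n) =
      ∫ z : sphere (0 : Euc n) 1 × ℝ, g (x + z.2 • (z.1 : Euc n))
        ∂((sphereMeasure n).prod ν) :=
  (integral_prod _ (integrable_translate hg hgs
    (a := fun z : sphere (0 : Euc n) 1 × ℝ => z.2 • (z.1 : Euc n)) (by fun_prop) x)).symm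

theorem hasFDerivAt_rayAverage [IsFiniteMeasure ν] {f : Euc n → ℝ} (hf : ContDiff ℝ 1 f)
    (hfs : HasCompactSupport f) (x θ : Euc n) :
    HasFDerivAt (fun y => rayAverage ν f y θ) (rayAverage ν (fderiv ℝ f) x θ) x := by
  have hd : Continuous (fderiv ℝ f) := hf.continuous_fderiv (by norm_num)
  obtain ⟨C, hC⟩ := hd.bounded_above_of_compact_support (hfs.fderiv ℝ)
  refine hasFDerivAt_integral_of_dominated_of_fderiv_le
    (F' := fun y s => fderiv ℝ f (y + s • θ)) (bound := fun _ => C) Filter.univ_mem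
    (Filter.Eventually.of_forall fun y => (integrable_ray hf.continuous hfs y θ).1)
    (integrable_ray hf.continuous hfs x θ) (integrable_ray hd (hfs.fderiv ℝ) x θ).1
    (ae_of_all _ fun s y _ => hC _) (integrable_const _) (ae_of_all _ fun s y _ => ?_)
  simpa [Function.comp_def] using ((hf.differentiable (by norm_num) (y + s • θ)).hasFDerivAt).comp y
    ((hasFDerivAt_id y).add_const (s • θ))

theorem hasFDerivAt_integral_exp_neg_rayAverage [IsFiniteMeasure ν] {f : Euc n → ℝ}
    (hf : ContDiff ℝ 1 f) (hfs : HasCompactSupport f) (x : Euc n) :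
    HasFDerivAt (fun y => ∫ θ : sphere (0 : Euc n) 1, Real.exp (-rayAverage ν f y θ)
        ∂(sphereMeasure n))
      (∫ θ : sphere (0 : Euc n) 1, Real.exp (-rayAverage ν f x θ) •
        -rayAverage ν (fderiv ℝ f) x θ ∂(sphereMeasure n)) x := by
  have hd : Continuous (fderiv ℝ f) := hf.continuous_fderiv (by norm_num)
  obtain ⟨C, hC⟩ := hf.continuous.bounded_above_of_compact_support hfs
  obtain ⟨C', hC'⟩ := hd.bounded_above_of_compact_support (hfs.fderiv ℝ)
  have hcont : ∀ y, Continuous fun θ : sphere (0 : Euc n) 1 =>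
      Real.exp (-rayAverage ν f y θ) := fun y =>
    Real.continuous_exp.comp
      ((continuous_rayAverage hf.continuous hfs y).comp continuous_subtype_val).neg
  have hcont' : Continuous fun θ : sphere (0 : Euc n) 1 => rayAverage ν (fderiv ℝ f) x θ :=
    (continuous_rayAverage hd (hfs.fderiv ℝ) x).comp continuous_subtype_val
  refine hasFDerivAt_integral_of_dominated_of_fderiv_le
    (F' := fun y (θ : sphere (0 : Euc n) 1) => Real.exp (-rayAverage ν f y θ) •
        -rayAverage ν (fderiv ℝ f) y θ)
    (bound := fun _ => Real.exp (C * ν.real Set.univ) * (C' * ν.real Set.univ)) Filter.univ_mem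
    (Filter.Eventually.of_forall fun y => (hcont y).aestronglyMeasurable)
    ((hcont x).integrable_of_hasCompactSupport (HasCompactSupport.of_compactSpace _))
    ((hcont x).smul hcont'.neg).aestronglyMeasurable
    (ae_of_all _ fun θ y _ => ?_) (integrable_const _) (ae_of_all _ fun θ y _ => ?_)
  · rw [norm_smul, norm_neg, Real.norm_of_nonneg (Real.exp_pos _).le]
    gcongr
    · exact (neg_le_abs _).trans (norm_rayAverage_le hC y θ)
    · exact norm_rayAverage_le hC' y θ
  · exact (hasFDerivAt_rayAverage hf hfs y θ).neg.exp

theorem abs_exp_sub_exp_le {a b m : ℝ} (ha : a ≤ m) (hb : b ≤ m) :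
    |Real.exp a - Real.exp b| ≤ Real.exp m * |a - b| := by
  wlog hab : b ≤ a generalizing a b
  · rw [abs_sub_comm, abs_sub_comm a b]
    exact this hb ha (le_of_not_ge hab)
  rw [abs_of_nonneg (sub_nonneg.2 (Real.exp_le_exp.2 hab)), abs_of_nonneg (sub_nonneg.2 hab)]
  have h1 : Real.exp a * (b - a + 1) ≤ Real.exp b := by
    calc Real.exp a * (b - a + 1) ≤ Real.exp a * Real.exp (b - a) := by
          gcongr
          exact Real.add_one_le_exp _
      _ = Real.exp b := by rw [← Real.exp_add]; ring_nf
  have h2 : Real.exp a * (a - b) ≤ Real.exp m * (a - b) := by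
    have := sub_nonneg.2 hab
    gcongr
  linarith

theorem abs_exp_sub_one_le {b m : ℝ} (hb : |b| ≤ m) : |Real.exp b - 1| ≤ Real.exp m - 1 := by
  obtain ⟨h1, h2⟩ := abs_le.1 hb
  have e1 := Real.add_one_le_exp m
  have e2 := Real.add_one_le_exp b
  have e3 := Real.exp_le_exp.2 h2
  exact abs_le.2 ⟨by linarith, by linarith⟩

variable {f₁ f₂ : Euc n → ℝ} {M : ℝ}

theorem rayAverage_sub [IsFiniteMeasure ν] {g₁ g₂ : Euc n → F} (h₁ : Continuous g₁)
    (h₂ : Continuous g₂) (hs₁ : HasCompactSupport g₁) (hs₂ : HasCompactSupport g₂)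
    (x θ : Euc n) :
    rayAverage ν (fun y => g₁ y - g₂ y) x θ = rayAverage ν g₁ x θ - rayAverage ν g₂ x θ :=
  integral_sub (integrable_ray h₁ hs₁ x θ) (integrable_ray h₂ hs₂ x θ)

theorem abs_exp_neg_rayAverage_sub_le [IsFiniteMeasure ν] (h₁ : Continuous f₁)
    (h₂ : Continuous f₂) (hs₁ : HasCompactSupport f₁) (hs₂ : HasCompactSupport f₂)
    (hM₁ : ∀ x, ‖f₁ x‖ ≤ M) (hM₂ : ∀ x, ‖f₂ x‖ ≤ M) (x θ : Euc n) :
    |Real.exp (-rayAverage ν f₁ x θ) - Real.exp (-rayAverage ν f₂ x θ)| ≤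
      Real.exp (M * ν.real Set.univ) * rayAverage ν (fun y => |f₁ y - f₂ y|) x θ := by
  refine (abs_exp_sub_exp_le ((neg_le_abs _).trans (norm_rayAverage_le hM₁ x θ))
    ((neg_le_abs _).trans (norm_rayAverage_le hM₂ x θ))).trans ?_
  gcongr
  rw [neg_sub_neg, abs_sub_comm, ← rayAverage_sub (ν := ν) h₁ h₂ hs₁ hs₂ x θ]
  exact norm_rayAverage_le_rayAverage_norm (ν := ν) (fun y => f₁ y - f₂ y) x θ

theorem abs_integral_exp_neg_rayAverage_sub_le [IsFiniteMeasure ν] (h₁ : Continuous f₁)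
    (h₂ : Continuous f₂) (hs₁ : HasCompactSupport f₁) (hs₂ : HasCompactSupport f₂)
    (hM₁ : ∀ x, ‖f₁ x‖ ≤ M) (hM₂ : ∀ x, ‖f₂ x‖ ≤ M) (x : Euc n) :
    |∫ θ : sphere (0 : Euc n) 1, Real.exp (-rayAverage ν f₁ x θ) ∂(sphereMeasure n) -
      ∫ θ : sphere (0 : Euc n) 1, Real.exp (-rayAverage ν f₂ x θ) ∂(sphereMeasure n)| ≤
      Real.exp (M * ν.real Set.univ) *
        ∫ θ : sphere (0 : Euc n) 1, rayAverage ν (fun y => |f₁ y - f₂ y|) x θ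
          ∂(sphereMeasure n) := by
  have hi : ∀ {f : Euc n → ℝ}, Continuous f → HasCompactSupport f →
      Integrable (fun θ : sphere (0 : Euc n) 1 => Real.exp (-rayAverage ν f x θ))
        (sphereMeasure n) := fun hf hfs =>
    (Real.continuous_exp.comp ((continuous_rayAverage hf hfs x).comp
      continuous_subtype_val).neg).integrable_of_hasCompactSupport
        (HasCompactSupport.of_compactSpace _)
  rw [← integral_sub (hi h₁ hs₁) (hi h₂ hs₂), ← integral_const_mul, ← Real.norm_eq_abs]
  refine norm_integral_le_of_norm_le ((integrable_rayAverage (ν := ν)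
    (g := fun y => |f₁ y - f₂ y|) (h₁.sub h₂).abs (hs₁.sub hs₂).norm x).const_mul _) (ae_of_all _ fun θ => ?_)
  exact abs_exp_neg_rayAverage_sub_le h₁ h₂ hs₁ hs₂ hM₁ hM₂ x θ

theorem norm_integral_deriv_sub_le [IsFiniteMeasure ν] (h₁ : ContDiff ℝ 1 f₁)
    (h₂ : ContDiff ℝ 1 f₂) (hs₁ : HasCompactSupport f₁) (hs₂ : HasCompactSupport f₂)
    (hM₁ : ∀ x, ‖f₁ x‖ ≤ M) (hM₂ : ∀ x, ‖f₂ x‖ ≤ M) (hM₁' : ∀ x, ‖fderiv ℝ f₁ x‖ ≤ M)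
    (x : Euc n) :
    ‖(∫ θ : sphere (0 : Euc n) 1, Real.exp (-rayAverage ν f₁ x θ) •
        -rayAverage ν (fderiv ℝ f₁) x θ ∂(sphereMeasure n)) -
      ∫ θ : sphere (0 : Euc n) 1, Real.exp (-rayAverage ν f₂ x θ) •
        -rayAverage ν (fderiv ℝ f₂) x θ ∂(sphereMeasure n)‖ ≤
      Real.exp (M * ν.real Set.univ) * (M * ν.real Set.univ) *
        (∫ θ : sphere (0 : Euc n) 1, rayAverage ν (fun y => |f₁ y - f₂ y|) x θ
          ∂(sphereMeasure n)) +
      (Real.exp (M * ν.real Set.univ) - 1) *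
        (∫ θ : sphere (0 : Euc n) 1,
          rayAverage ν (fun y => ‖fderiv ℝ f₁ y - fderiv ℝ f₂ y‖) x θ ∂(sphereMeasure n)) +
      ‖∫ θ : sphere (0 : Euc n) 1,
        rayAverage ν (fun y => fderiv ℝ f₁ y - fderiv ℝ f₂ y) x θ ∂(sphereMeasure n)‖ := by
  have hd₁ : Continuous (fderiv ℝ f₁) := h₁.continuous_fderiv (by norm_num)
  have hd₂ : Continuous (fderiv ℝ f₂) := h₂.continuous_fderiv (by norm_num)
  have hds₁ := hs₁.fderiv ℝ
  have hds₂ := hs₂.fderiv ℝ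
  have hi : ∀ {f : Euc n → ℝ}, ContDiff ℝ 1 f → HasCompactSupport f →
      Integrable (fun θ : sphere (0 : Euc n) 1 => Real.exp (-rayAverage ν f x θ) •
        -rayAverage ν (fderiv ℝ f) x θ) (sphereMeasure n) := fun hf hfs =>
    ((Real.continuous_exp.comp ((continuous_rayAverage hf.continuous hfs x).comp
      continuous_subtype_val).neg).smul
        ((continuous_rayAverage (hf.continuous_fderiv (by norm_num)) (hfs.fderiv ℝ) x).comp
          continuous_subtype_val).neg).integrable_of_hasCompactSupport
        (HasCompactSupport.of_compactSpace _)
  have hG := integrable_rayAverage (ν := ν) (g := fun y => fderiv ℝ f₁ y - fderiv ℝ f₂ y)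
    (hd₁.sub hd₂) (hds₁.sub hds₂) x
  have hP := integrable_rayAverage (ν := ν) (g := fun y => |f₁ y - f₂ y|)
    (h₁.continuous.sub h₂.continuous).abs (hs₁.sub hs₂).norm x
  have hQ := integrable_rayAverage (ν := ν) (g := fun y => ‖fderiv ℝ f₁ y - fderiv ℝ f₂ y‖)
    (hd₁.sub hd₂).norm (hds₁.sub hds₂).norm x
  rw [← integral_sub (hi h₁ hs₁) (hi h₂ hs₂), ← integral_const_mul, ← integral_const_mul,
    ← integral_add (hP.const_mul _) (hQ.const_mul _)]
  refine (norm_le_norm_add_norm_sub' _ (-∫ θ : sphere (0 : Euc n) 1, rayAverage ν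
    (fun y => fderiv ℝ f₁ y - fderiv ℝ f₂ y) x θ ∂(sphereMeasure n))).trans ?_
  have hadd := integral_add ((hi h₁ hs₁).sub (hi h₂ hs₂)) hG
  simp only [Pi.sub_apply] at hadd
  rw [norm_neg, add_comm, sub_neg_eq_add, ← hadd]
  gcongr
  refine norm_integral_le_of_norm_le ((hP.const_mul _).add (hQ.const_mul _))
    (ae_of_all _ fun θ => ?_)
  have hsub := rayAverage_sub (ν := ν) hd₁ hd₂ hds₁ hds₂ x θ
  have halg : Real.exp (-rayAverage ν f₁ x θ) • -rayAverage ν (fderiv ℝ f₁) x θ -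
        Real.exp (-rayAverage ν f₂ x θ) • -rayAverage ν (fderiv ℝ f₂) x θ +
        rayAverage ν (fun y => fderiv ℝ f₁ y - fderiv ℝ f₂ y) x θ =
      -((Real.exp (-rayAverage ν f₁ x θ) - Real.exp (-rayAverage ν f₂ x θ)) •
          rayAverage ν (fderiv ℝ f₁) x θ) -
        (Real.exp (-rayAverage ν f₂ x θ) - 1) •
          rayAverage ν (fun y => fderiv ℝ f₁ y - fderiv ℝ f₂ y) x θ := by
    rw [hsub]
    module
  refine (congrArg norm halg).trans_le ((norm_sub_le _ _).trans ?_)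
  rw [norm_neg, norm_smul, norm_smul, Real.norm_eq_abs, Real.norm_eq_abs]
  have b1 := abs_exp_neg_rayAverage_sub_le (ν := ν) h₁.continuous h₂.continuous hs₁ hs₂ hM₁ hM₂
    x θ
  have b2 := norm_rayAverage_le (ν := ν) hM₁' x θ
  have b3 : |Real.exp (-rayAverage ν f₂ x θ) - 1| ≤ Real.exp (M * ν.real Set.univ) - 1 :=
    abs_exp_sub_one_le ((abs_neg _).trans_le (norm_rayAverage_le hM₂ x θ))
  have b4 := norm_rayAverage_le_rayAverage_norm (ν := ν)
    (fun y => fderiv ℝ f₁ y - fderiv ℝ f₂ y) x θ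
  refine add_le_add ?_ (mul_le_mul b3 b4 (norm_nonneg _) ((abs_nonneg _).trans b3))
  calc _ ≤ _ := mul_le_mul b1 b2 (norm_nonneg _) ((abs_nonneg _).trans b1)
    _ = _ := by ring

end RayAverage

section Stability

variable {n : ℕ} {ν : Measure ℝ} {f₁ f₂ : Euc n → ℝ} {M D : ℝ}

theorem exists_cutoff_measure_symbol_le (n : ℕ) {T : ℝ} (hT : 0 < T) :
    ∃ ν : Measure ℝ, IsFiniteMeasure ν ∧
      (∀ f : ℝ → ℝ, (∀ s, T < |s| → f s = 0) → ∫ s, f s ∂ν = ∫ s, f s) ∧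
      ∃ D, 0 ≤ D ∧ ∀ ξ : Euc n, ‖ξ‖ * ‖∫ z : sphere (0 : Euc n) 1 × ℝ,
        (𝐞 (inner ℝ (z.2 • (z.1 : Euc n)) ξ) : ℂ) ∂((sphereMeasure n).prod ν)‖ ≤ D := by
  obtain ⟨ν, hν, hcut, A, hA, hdecay⟩ := exists_cutoff_measure T hT
  obtain ⟨C, hC, hsphere⟩ := exists_norm_mul_integral_sphere_le n
  refine ⟨ν, hν, hcut, A * C, mul_nonneg hA hC, fun ξ => ?_⟩
  have hint : Integrable (fun z : sphere (0 : Euc n) 1 × ℝ =>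
      (𝐞 (inner ℝ (z.2 • (z.1 : Euc n)) ξ) : ℂ)) ((sphereMeasure n).prod ν) := by
    refine Integrable.of_bound (C := 1) ?_ (ae_of_all _ fun z => (Circle.norm_coe _).le)
    exact Continuous.aestronglyMeasurable (by fun_prop)
  rw [integral_prod _ hint]
  have hle : ‖∫ θ : sphere (0 : Euc n) 1, ∫ s, (𝐞 (inner ℝ (s • (θ : Euc n)) ξ) : ℂ) ∂ν
      ∂(sphereMeasure n)‖ ≤
      ∫ θ : sphere (0 : Euc n) 1, A * (1 + inner ℝ (θ : Euc n) ξ ^ 2)⁻¹ ∂(sphereMeasure n) := by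
    refine norm_integral_le_of_norm_le ?_ (ae_of_all _ fun θ => ?_)
    · refine Continuous.integrable_of_hasCompactSupport ?_ (HasCompactSupport.of_compactSpace _)
      refine continuous_const.mul (Continuous.inv₀ (by fun_prop) fun θ => ?_)
      positivity
    · simpa [inner_smul_left] using hdecay (inner ℝ (θ : Euc n) ξ)
  calc _ ≤ ‖ξ‖ * (A * ∫ θ : sphere (0 : Euc n) 1, (1 + inner ℝ (θ : Euc n) ξ ^ 2)⁻¹
        ∂(sphereMeasure n)) := by
        rw [integral_const_mul] at hle
        gcongr
    _ = A * (‖ξ‖ * ∫ θ : sphere (0 : Euc n) 1, (1 + inner ℝ (θ : Euc n) ξ ^ 2)⁻¹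
        ∂(sphereMeasure n)) := by ring
    _ ≤ A * C := by
        gcongr
        exact hsphere ξ

theorem norm_le_sum_abs_apply_single (L : Euc n →L[ℝ] ℝ) :
    ‖L‖ ≤ ∑ j, |L (EuclideanSpace.single j 1)| := by
  refine L.opNorm_le_bound (Finset.sum_nonneg fun j _ => abs_nonneg _) fun x => ?_
  have hx : x = ∑ j, x j • EuclideanSpace.single j (1 : ℝ) := by
    ext i
    simp [Finset.sum_apply, Pi.single_apply]
  conv_lhs => rw [hx]
  rw [map_sum, Finset.sum_mul]
  refine (norm_sum_le _ _).trans (Finset.sum_le_sum fun j _ => ?_)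
  rw [map_smul, norm_smul, mul_comm]
  exact mul_le_mul_of_nonneg_left (PiLp.norm_apply_le x j) (norm_nonneg _)

theorem integrable_sq_integral_rayAverage [IsFiniteMeasure ν] {g : Euc n → ℝ}
    (hg : Continuous g) (hgs : HasCompactSupport g) :
    Integrable fun x =>
      (∫ θ : sphere (0 : Euc n) 1, rayAverage ν g x θ ∂(sphereMeasure n)) ^ 2 := by
  simp_rw [integral_rayAverage_eq hg hgs]
  exact integrable_sq_average hg hgs (by fun_prop)

theorem integral_sq_integral_rayAverage_le [IsFiniteMeasure ν] {g : Euc n → ℝ}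
    (hg : Continuous g) (hgs : HasCompactSupport g) :
    ∫ x, (∫ θ : sphere (0 : Euc n) 1, rayAverage ν g x θ ∂(sphereMeasure n)) ^ 2 ≤
      ((sphereMeasure n).prod ν).real Set.univ ^ 2 * ∫ x, g x ^ 2 := by
  simp_rw [integral_rayAverage_eq hg hgs]
  exact integral_sq_average_le hg hgs (by fun_prop)

theorem integral_rayAverage_apply [IsFiniteMeasure ν] {g : Euc n → Euc n →L[ℝ] ℝ}
    (hg : Continuous g) (hgs : HasCompactSupport g) (x v : Euc n) :
    (∫ θ : sphere (0 : Euc n) 1, rayAverage ν g x θ ∂(sphereMeasure n)) v =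
      ∫ z : sphere (0 : Euc n) 1 × ℝ, g (x + z.2 • (z.1 : Euc n)) v
        ∂((sphereMeasure n).prod ν) := by
  rw [integral_rayAverage_eq hg hgs]
  exact ContinuousLinearMap.integral_apply (integrable_translate hg hgs
    (a := fun z : sphere (0 : Euc n) 1 × ℝ => z.2 • (z.1 : Euc n)) (by fun_prop) x) v

theorem rpow_half_le_of_le_add {x a b p q : ℝ} (ha : 0 ≤ a) (hb : 0 ≤ b) (hp : 0 ≤ p)
    (hq : 0 ≤ q) (h : x ≤ p ^ 2 * a + q ^ 2 * b) :
    x ^ ((1 : ℝ) / 2) ≤ p * a ^ ((1 : ℝ) / 2) + q * b ^ ((1 : ℝ) / 2) := by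
  simp only [← Real.sqrt_eq_rpow]
  refine Real.sqrt_le_iff.2 ⟨by positivity, ?_⟩
  nlinarith [Real.sq_sqrt ha, Real.sq_sqrt hb,
    mul_nonneg (mul_nonneg hp hq) (mul_nonneg (Real.sqrt_nonneg a) (Real.sqrt_nonneg b))]

theorem add_add_sq_le (a b c : ℝ) :
    (a + b + c) ^ 2 ≤ 3 * a ^ 2 + 3 * b ^ 2 + 3 * c ^ 2 := by
  nlinarith [sq_nonneg (a - b), sq_nonneg (a - c), sq_nonneg (b - c)]

theorem setIntegral_le_integral_of_le {U : Set (Euc n)} (hU : MeasurableSet U)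
    {u w : Euc n → ℝ} (hu : ∀ x, 0 ≤ u x) (huw : ∀ x ∈ U, u x ≤ w x) (hw : Integrable w)
    (hw0 : ∀ x, 0 ≤ w x) : ∫ x in U, u x ≤ ∫ x, w x :=
  (integral_mono_of_nonneg (ae_of_all _ hu) hw.integrableOn
    ((ae_restrict_iff' hU).2 (ae_of_all _ huw))).trans
      (setIntegral_le_integral hw (ae_of_all _ hw0))

theorem setIntegral_sq_exp_neg_rayAverage_sub_le [IsFiniteMeasure ν] {U : Set (Euc n)}
    (hU : MeasurableSet U) (h₁ : Continuous f₁) (h₂ : Continuous f₂)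
    (hs₁ : HasCompactSupport f₁) (hs₂ : HasCompactSupport f₂)
    (hM₁ : ∀ x, ‖f₁ x‖ ≤ M) (hM₂ : ∀ x, ‖f₂ x‖ ≤ M) :
    ∫ x in U, (∫ θ : sphere (0 : Euc n) 1, Real.exp (-rayAverage ν f₁ x θ) ∂(sphereMeasure n) -
      ∫ θ : sphere (0 : Euc n) 1, Real.exp (-rayAverage ν f₂ x θ) ∂(sphereMeasure n)) ^ 2 ≤
      (Real.exp (M * ν.real Set.univ) * ((sphereMeasure n).prod ν).real Set.univ) ^ 2 *
        ∫ x, (f₁ x - f₂ x) ^ 2 := by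
  have hc : Continuous fun y => |f₁ y - f₂ y| := (h₁.sub h₂).abs
  have hs : HasCompactSupport fun y => |f₁ y - f₂ y| := (hs₁.sub hs₂).norm
  refine (setIntegral_le_integral_of_le hU (fun x => sq_nonneg _) (fun x _ => ?_)
    ((integrable_sq_integral_rayAverage (ν := ν) hc hs).const_mul
      (Real.exp (M * ν.real Set.univ) ^ 2)) (fun x => by positivity)).trans ?_
  · rw [← mul_pow, ← sq_abs]
    gcongr
    exact abs_integral_exp_neg_rayAverage_sub_le h₁ h₂ hs₁ hs₂ hM₁ hM₂ x
  · rw [integral_const_mul, mul_pow, mul_assoc]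
    gcongr
    simpa only [sq_abs] using integral_sq_integral_rayAverage_le (ν := ν) hc hs

theorem setIntegral_sq_norm_deriv_sub_le [IsFiniteMeasure ν] {U : Set (Euc n)}
    (hU : MeasurableSet U) (h₁ : ContDiff ℝ 1 f₁) (h₂ : ContDiff ℝ 1 f₂)
    (hs₁ : HasCompactSupport f₁) (hs₂ : HasCompactSupport f₂)
    (hM₁ : ∀ x, ‖f₁ x‖ ≤ M) (hM₂ : ∀ x, ‖f₂ x‖ ≤ M) (hM₁' : ∀ x, ‖fderiv ℝ f₁ x‖ ≤ M)
    (hD₀ : 0 ≤ D) (hD : ∀ ξ : Euc n, ‖ξ‖ * ‖∫ z : sphere (0 : Euc n) 1 × ℝ,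
        (𝐞 (inner ℝ (z.2 • (z.1 : Euc n)) ξ) : ℂ) ∂((sphereMeasure n).prod ν)‖ ≤ D) :
    ∫ x in U, ‖(∫ θ : sphere (0 : Euc n) 1, Real.exp (-rayAverage ν f₁ x θ) •
        -rayAverage ν (fderiv ℝ f₁) x θ ∂(sphereMeasure n)) -
      ∫ θ : sphere (0 : Euc n) 1, Real.exp (-rayAverage ν f₂ x θ) •
        -rayAverage ν (fderiv ℝ f₂) x θ ∂(sphereMeasure n)‖ ^ 2 ≤
      (3 * (Real.exp (M * ν.real Set.univ) * (M * ν.real Set.univ) *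
          ((sphereMeasure n).prod ν).real Set.univ + n * (2 * π * D))) ^ 2 *
        (∫ x, (f₁ x - f₂ x) ^ 2) +
      (3 * ((Real.exp (M * ν.real Set.univ) - 1) *
          ((sphereMeasure n).prod ν).real Set.univ)) ^ 2 *
        ∫ x, ‖fderiv ℝ (fun y => f₁ y - f₂ y) x‖ ^ 2 := by
  have hM : 0 ≤ M := (norm_nonneg _).trans (hM₁ 0)
  have hsub : ∀ y, fderiv ℝ f₁ y - fderiv ℝ f₂ y = fderiv ℝ (fun y => f₁ y - f₂ y) y :=
    fun y => (fderiv_fun_sub (h₁.differentiable (by norm_num) y)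
      (h₂.differentiable (by norm_num) y)).symm
  have hle := norm_integral_deriv_sub_le (ν := ν) h₁ h₂ hs₁ hs₂ hM₁ hM₂ hM₁'
  simp only [hsub] at hle
  have hh : ContDiff ℝ 1 fun y => f₁ y - f₂ y := h₁.sub h₂
  have hs : HasCompactSupport fun y => f₁ y - f₂ y := hs₁.sub hs₂
  have hd : Continuous (fderiv ℝ fun y => f₁ y - f₂ y) := hh.continuous_fderiv (by norm_num)
  have hds := hs.fderiv ℝ
  have hPi := integrable_sq_integral_rayAverage (ν := ν) (g := fun y => |f₁ y - f₂ y|)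
    hh.continuous.abs hs.norm
  have hPle := integral_sq_integral_rayAverage_le (ν := ν) (g := fun y => |f₁ y - f₂ y|)
    hh.continuous.abs hs.norm
  have hQi := integrable_sq_integral_rayAverage (ν := ν) hd.norm hds.norm
  have hQle := integral_sq_integral_rayAverage_le (ν := ν) hd.norm hds.norm
  have hSi : ∀ j : Fin n, Integrable fun x => ((∫ θ : sphere (0 : Euc n) 1,
      rayAverage ν (fderiv ℝ fun y => f₁ y - f₂ y) x θ ∂(sphereMeasure n))
        (EuclideanSpace.single j 1)) ^ 2 := fun j => by
    simp_rw [integral_rayAverage_apply hd hds]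
    exact integrable_sq_average (g := fun y => fderiv ℝ (fun y => f₁ y - f₂ y) y
      (EuclideanSpace.single j 1)) (by fun_prop) (hs.fderiv_apply ℝ _) (by fun_prop)
  have hSle : ∀ j : Fin n, ∫ x, ((∫ θ : sphere (0 : Euc n) 1,
      rayAverage ν (fderiv ℝ fun y => f₁ y - f₂ y) x θ ∂(sphereMeasure n))
        (EuclideanSpace.single j 1)) ^ 2 ≤ (2 * π * D) ^ 2 * ∫ x, (f₁ x - f₂ x) ^ 2 := fun j => by
    simp_rw [integral_rayAverage_apply hd hds]
    simpa using integral_sq_average_fderiv_le (by fun_prop) hD hh hs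
      (EuclideanSpace.single j (1 : ℝ))
  simp only [sq_abs] at hPle
  set α := Real.exp (M * ν.real Set.univ) * (M * ν.real Set.univ) with hα
  set β := Real.exp (M * ν.real Set.univ) - 1 with hβ
  set B := ((sphereMeasure n).prod ν).real Set.univ with hB
  have hα0 : 0 ≤ α := by positivity
  have hB0 : 0 ≤ B := measureReal_nonneg
  refine (setIntegral_le_integral_of_le hU (fun x => sq_nonneg _) (fun x _ => ?_)
    (((hPi.const_mul (3 * α ^ 2)).add (hQi.const_mul (3 * β ^ 2))).add
      ((integrable_finsetSum Finset.univ fun j _ => hSi j).const_mul (3 * (n : ℝ))))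
    (fun x => ?_)).trans ?_
  · refine (pow_le_pow_left₀ (norm_nonneg _) (hle x) 2).trans ?_
    have hop := pow_le_pow_left₀ (norm_nonneg _) (norm_le_sum_abs_apply_single
      (∫ θ : sphere (0 : Euc n) 1,
        rayAverage ν (fderiv ℝ fun y => f₁ y - f₂ y) x θ ∂(sphereMeasure n))) 2
    have hcs := hop.trans sq_sum_le_card_mul_sum_sq
    simp only [sq_abs, Finset.card_univ, Fintype.card_fin] at hcs
    simp only [Pi.add_apply]
    refine (add_add_sq_le _ _ _).trans ?_
    refine add_le_add (le_of_eq ?_) ?_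
    · ring
    · rw [mul_assoc]
      exact mul_le_mul_of_nonneg_left hcs zero_le_three
  · simp only [Pi.add_apply]
    have := Finset.sum_nonneg fun j (_ : j ∈ Finset.univ) => sq_nonneg ((∫ θ : sphere (0 : Euc n) 1,
      rayAverage ν (fderiv ℝ fun y => f₁ y - f₂ y) x θ ∂(sphereMeasure n))
        (EuclideanSpace.single j 1))
    positivity
  · rw [integral_add' ((hPi.const_mul _).add (hQi.const_mul _))
      ((integrable_finsetSum Finset.univ fun j _ => hSi j).const_mul _),
      integral_add' (hPi.const_mul _) (hQi.const_mul _), integral_const_mul, integral_const_mul,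
      integral_const_mul, integral_finsetSum _ fun j _ => hSi j]
    have hsum := Finset.sum_le_sum fun j (_ : j ∈ Finset.univ) => hSle j
    rw [Finset.sum_const, Finset.card_univ, Fintype.card_fin, nsmul_eq_mul] at hsum
    have hI : 0 ≤ ∫ x, (f₁ x - f₂ x) ^ 2 := integral_nonneg fun x => sq_nonneg _
    have hJ : 0 ≤ ∫ x, ‖fderiv ℝ (fun y => f₁ y - f₂ y) x‖ ^ 2 :=
      integral_nonneg fun x => sq_nonneg _
    refine (add_le_add_three (mul_le_mul_of_nonneg_left hPle (by positivity))
      (mul_le_mul_of_nonneg_left hQle (by positivity))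
      (mul_le_mul_of_nonneg_left hsum (by positivity))).trans ?_
    have hpos : 0 ≤ (α * B) * (n * (2 * π * D)) := by positivity
    have e₁ : 3 * (α * B) ^ 2 + 3 * (n * (2 * π * D)) ^ 2 ≤
        (3 * (α * B + n * (2 * π * D))) ^ 2 := by
      nlinarith [sq_nonneg (α * B), sq_nonneg (n * (2 * π * D))]
    have e₂ : 3 * (β * B) ^ 2 ≤ (3 * (β * B)) ^ 2 := by nlinarith [sq_nonneg (β * B)]
    refine le_trans (le_of_eq ?_) (add_le_add (mul_le_mul_of_nonneg_right e₁ hI)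
      (mul_le_mul_of_nonneg_right e₂ hJ))
    ring

theorem hasCompactSupport_of_support_subset_closure {Ω : Set (Euc n)}
    (hΩ : Bornology.IsBounded Ω) {f : Euc n → ℝ} (hf : Function.support f ⊆ closure Ω) :
    HasCompactSupport f :=
  HasCompactSupport.intro hΩ.isCompact_closure fun _ hx =>
    Function.notMem_support.1 fun h => hx (hf h)

theorem norm_le_and_norm_fderiv_le_of_iSup_add_iSup_le {f : Euc n → ℝ} (hf : ContDiff ℝ 1 f)
    (hfs : HasCompactSupport f) (hM : (⨆ x, |f x|) + (⨆ x, ‖fderiv ℝ f x‖) ≤ M) :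
    (∀ x, ‖f x‖ ≤ M) ∧ ∀ x, ‖fderiv ℝ f x‖ ≤ M := by
  obtain ⟨C, hC⟩ := hf.continuous.bounded_above_of_compact_support hfs
  obtain ⟨C', hC'⟩ := (hf.continuous_fderiv (by norm_num)).bounded_above_of_compact_support
    (hfs.fderiv ℝ)
  have hb : BddAbove (Set.range fun x => |f x|) := ⟨C, by rintro _ ⟨x, rfl⟩; exact hC x⟩
  have hb' : BddAbove (Set.range fun x => ‖fderiv ℝ f x‖) := ⟨C', by rintro _ ⟨x, rfl⟩; exact hC' x⟩
  have h0 : 0 ≤ ⨆ x, |f x| := Real.iSup_nonneg fun x => abs_nonneg _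
  have h0' : 0 ≤ ⨆ x, ‖fderiv ℝ f x‖ := Real.iSup_nonneg fun x => norm_nonneg _
  exact ⟨fun x => by linarith [le_ciSup hb x, Real.norm_eq_abs (f x)],
    fun x => by linarith [le_ciSup hb' x]⟩

theorem singlePixel_eq_integral_exp_neg_rayAverage {R : ℝ}
    (hcut : ∀ f : ℝ → ℝ, (∀ s, 2 * R < |s| → f s = 0) → ∫ s, f s ∂ν = ∫ s, f s)
    {f : Euc n → ℝ} (hf : Function.support f ⊆ ball 0 R) {x : Euc n} (hx : x ∈ ball 0 R) :
    singlePixel f x =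
      ∫ θ : sphere (0 : Euc n) 1, Real.exp (-rayAverage ν f x θ) ∂(sphereMeasure n) := by
  refine integral_congr_ae (ae_of_all _ fun θ => congrArg (fun t => Real.exp (-t)) ?_)
  refine (hcut _ fun s hs => Function.notMem_support.1 fun h => ?_).symm
  have h1 := mem_ball_zero_iff.1 (hf h)
  have h2 := mem_ball_zero_iff.1 hx
  have h3 : |s| ≤ ‖x + s • (θ : Euc n)‖ + ‖x‖ := by
    simpa [norm_smul] using norm_sub_le (x + s • (θ : Euc n)) x
  linarith

end Stability

/-- For `n ≥ 3` and open bounded `Ω, Ω₁` with `closure Ω ⊂ Ω₁`, there is a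
constant `C > 0`, independent of `M`, such that for every `M > 0` and all `C¹` functions
`f₁, f₂` supported in `closure Ω` with `‖f_j‖_{C¹} ≤ M`,
`‖Kf₁ − Kf₂‖_{H¹(Ω₁)} ≤ C(1 + e^{CM} + Me^{CM})‖f₁ − f₂‖_{L²} + C(e^{CM} − 1)‖∇(f₁ − f₂)‖_{L²}`. -/
theorem singlePixel_lipschitz_stability (n : ℕ) (hn : 3 ≤ n) (Ω Ω₁ : Set (Euc n))
    (hΩo : IsOpen Ω) (hΩb : Bornology.IsBounded Ω)
    (hΩ₁o : IsOpen Ω₁) (hΩ₁b : Bornology.IsBounded Ω₁) (hΩΩ₁ : closure Ω ⊆ Ω₁) :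
    ∃ C > 0, ∀ M : ℝ, 0 < M → ∀ f₁ f₂ : Euc n → ℝ,
      ContDiff ℝ 1 f₁ → ContDiff ℝ 1 f₂ →
      Function.support f₁ ⊆ closure Ω → Function.support f₂ ⊆ closure Ω →
      (⨆ x : Euc n, |f₁ x|) + (⨆ x : Euc n, ‖fderiv ℝ f₁ x‖) ≤ M →
      (⨆ x : Euc n, |f₂ x|) + (⨆ x : Euc n, ‖fderiv ℝ f₂ x‖) ≤ M →
      H1norm Ω₁ (fun x => singlePixel f₁ x - singlePixel f₂ x) ≤
        C * (1 + Real.exp (C * M) + M * Real.exp (C * M)) * L2norm (fun y => f₁ y - f₂ y) +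
          C * (Real.exp (C * M) - 1) *
            (∫ x : Euc n, ‖fderiv ℝ (fun y => f₁ y - f₂ y) x‖ ^ 2) ^ ((1 : ℝ) / 2) := by
  obtain ⟨R, hR, hΩ₁R⟩ := hΩ₁b.subset_ball_lt 0 0
  obtain ⟨ν, _, hcut, D, hD₀, hD⟩ :=
    exists_cutoff_measure_symbol_le n (T := 2 * R) (by positivity)
  set c := ν.real Set.univ with hc
  set B := ((sphereMeasure n).prod ν).real Set.univ with hB
  have hc0 : 0 ≤ c := measureReal_nonneg
  have hB0 : 0 ≤ B := measureReal_nonneg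
  have hN0 : 0 ≤ n * (2 * π * D) := by positivity
  refine ⟨1 + c + 3 * B + 3 * (c * B) + 3 * (n * (2 * π * D)), by positivity,
    fun M hM f₁ f₂ h₁ h₂ hΩ₁ hΩ₂ hC₁ hC₂ => ?_⟩
  have hs₁ := hasCompactSupport_of_support_subset_closure hΩb hΩ₁
  have hs₂ := hasCompactSupport_of_support_subset_closure hΩb hΩ₂
  obtain ⟨hM₁, hM₁'⟩ := norm_le_and_norm_fderiv_le_of_iSup_add_iSup_le h₁ hs₁ hC₁
  obtain ⟨hM₂, -⟩ := norm_le_and_norm_fderiv_le_of_iSup_add_iSup_le h₂ hs₂ hC₂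
  have hK : ∀ x ∈ Ω₁, singlePixel f₁ x - singlePixel f₂ x =
      ∫ θ : sphere (0 : Euc n) 1, Real.exp (-rayAverage ν f₁ x θ) ∂(sphereMeasure n) -
        ∫ θ : sphere (0 : Euc n) 1, Real.exp (-rayAverage ν f₂ x θ) ∂(sphereMeasure n) :=
    fun x hx => by
      rw [singlePixel_eq_integral_exp_neg_rayAverage hcut (hΩ₁.trans (hΩΩ₁.trans hΩ₁R)) (hΩ₁R hx),
        singlePixel_eq_integral_exp_neg_rayAverage hcut (hΩ₂.trans (hΩΩ₁.trans hΩ₁R)) (hΩ₁R hx)]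
  have hK' : ∀ x ∈ Ω₁, fderiv ℝ (fun x => singlePixel f₁ x - singlePixel f₂ x) x =
      (∫ θ : sphere (0 : Euc n) 1, Real.exp (-rayAverage ν f₁ x θ) •
        -rayAverage ν (fderiv ℝ f₁) x θ ∂(sphereMeasure n)) -
      ∫ θ : sphere (0 : Euc n) 1, Real.exp (-rayAverage ν f₂ x θ) •
        -rayAverage ν (fderiv ℝ f₂) x θ ∂(sphereMeasure n) := fun x hx => by
    rw [(Filter.eventuallyEq_of_mem (hΩ₁o.mem_nhds hx) hK).fderiv_eq]
    exact ((hasFDerivAt_integral_exp_neg_rayAverage h₁ hs₁ x).sub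
      (hasFDerivAt_integral_exp_neg_rayAverage h₂ hs₂ x)).fderiv
  have hI : 0 ≤ ∫ x, (f₁ x - f₂ x) ^ 2 := integral_nonneg fun x => sq_nonneg _
  have hJ : 0 ≤ ∫ x, ‖fderiv ℝ (fun y => f₁ y - f₂ y) x‖ ^ 2 :=
    integral_nonneg fun x => sq_nonneg _
  have hE1 : 1 ≤ Real.exp (M * c) := Real.one_le_exp (by positivity)
  have hL2 := setIntegral_sq_exp_neg_rayAverage_sub_le (ν := ν) hΩ₁o.measurableSet
    h₁.continuous h₂.continuous hs₁ hs₂ hM₁ hM₂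
  have hgrad := setIntegral_sq_norm_deriv_sub_le (ν := ν) hΩ₁o.measurableSet h₁ h₂ hs₁ hs₂
    hM₁ hM₂ hM₁' hD₀ hD
  rw [← setIntegral_congr_fun hΩ₁o.measurableSet fun x hx => congrArg (· ^ 2) (hK x hx)] at hL2
  rw [← setIntegral_congr_fun hΩ₁o.measurableSet
    fun x hx => congrArg (fun L => ‖L‖ ^ 2) (hK' x hx)] at hgrad
  have hroot := rpow_half_le_of_le_add (p := Real.exp (M * c) * B) (q := 0) hI hJ (by positivity)
    le_rfl (hL2.trans (by simp [hc, hB]))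
  have hroot' := rpow_half_le_of_le_add
    (p := 3 * (Real.exp (M * c) * (M * c) * B + n * (2 * π * D))) hI hJ (by positivity)
    (mul_nonneg zero_le_three (mul_nonneg (sub_nonneg.2 hE1) hB0)) hgrad
  unfold H1norm L2norm
  refine (add_le_add hroot hroot').trans ?_
  have hIr : 0 ≤ (∫ x, (f₁ x - f₂ x) ^ 2) ^ ((1 : ℝ) / 2) := Real.rpow_nonneg hI _
  have hJr : 0 ≤ (∫ x, ‖fderiv ℝ (fun y => f₁ y - f₂ y) x‖ ^ 2) ^ ((1 : ℝ) / 2) :=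
    Real.rpow_nonneg hJ _
  rw [zero_mul, add_zero, ← add_assoc, ← add_mul]
  set C := 1 + c + 3 * B + 3 * (c * B) + 3 * (n * (2 * π * D)) with hCdef
  have hcB : 0 ≤ c * B := mul_nonneg hc0 hB0
  have hC0 : 0 ≤ C := by positivity
  have hE : Real.exp (M * c) ≤ Real.exp (C * M) := by
    rw [mul_comm M c]
    gcongr
    linarith
  refine add_le_add (mul_le_mul_of_nonneg_right ?_ hIr) (mul_le_mul_of_nonneg_right ?_ hJr)
  · have t₁ : B * Real.exp (M * c) ≤ C * Real.exp (C * M) := by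
      gcongr
      linarith
    have t₂ : 3 * (c * B) * (M * Real.exp (M * c)) ≤ C * (M * Real.exp (C * M)) := by
      gcongr
      linarith
    have t₃ : 3 * (n * (2 * π * D)) ≤ C := by linarith
    linarith
  · have t : 3 * B * (Real.exp (M * c) - 1) ≤ C * (Real.exp (C * M) - 1) :=
      mul_le_mul (by linarith) (by linarith) (by linarith) hC0
    linarith
end
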